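/- arXiv:1512.03336 — 5 statements merged into one kernel-verified Lean document; each statement's English description precedes it below -/
import Mathlib

section
/- For I = [0,1] and for I = [0,∞), the Cesàro function space Ces_∞(I) is isomorphic as a Banach space to the Cesàro sequence space ces_∞. -/
/-!
Both kinds of Cesàro space turn out to be isomorphic to `ℓ_∞(L_1[0,1))`, the space of bounded
sequences in `L_1[0,1)`.

*Function spaces* (`nonempty_equiv_of_repFun`).  Up to constants, the `Ces_∞(I)` norm of `f` is
`sup_k 2^{-k} ∫_{[2^k, 2^{k+1})} |f|` over the dyadic blocks contained in `I`, and each block is an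
affine copy of `[0,1)`.

*Sequence space* (`nonempty_equiv_of_repSeq`).  Up to constants, the `ces_∞` norm is the supremum
of the `L_1`-norms of the dyadic blocks of the sequence, so that `ces_∞` is the `ℓ_∞`-sum of the
spaces `ℓ_1^{2^m}`.  Viewing `ℓ_1^{2^m}` as the dyadic step functions of level `m` makes `ces_∞` a
complemented subspace of `ℓ_∞(L_1)`: the embedding is `blockL1`, the retraction is `averages`.

Conversely `ℓ_∞(L_1)` is complemented in `ces_∞`.  A function `f` in `L_1` is encoded by its averages
over finer and finer dyadic partitions.  To decode an arbitrary bounded sequence in `L_1`, take the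
limits of its integrals over each dyadic interval along a free ultrafilter; the resulting additive
interval function yields an `L_1`-bounded dyadic martingale, which converges almost everywhere to a
function in `L_1` by Doob's theorem.  This is a bounded linear operation (`exists_retraction`), and by
Lévy's upward theorem it returns `f` when applied to the averages of `f`.  Repeating every coordinate
infinitely often handles all terms of a sequence in `ℓ_∞(L_1)` at once.

Since `ℓ_∞(L_1)` is isomorphic to its own `ℓ_∞`-sum, Pełczyński's decomposition method (`pelczynski`)
turns the two complemented embeddings into an isomorphism.
-/

open MeasureTheory Filter Topology ENNReal Set

noncomputable section

/-- The `ces_∞` norm of a real sequence (0-based indexing: `x k` is the `(k+1)`-st term):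
`sup_{n ≥ 1} (1/n) ∑_{k=1}^n |x_k|`. -/
def cesNorm (x : ℕ → ℝ) : ℝ≥0∞ :=
  ⨆ n : ℕ, (∑ k ∈ Finset.range (n + 1), ENNReal.ofReal |x k|) / ((n : ℝ≥0∞) + 1)

/-- A Banach space `E` *represents* the sequence space with extended-valued norm functional
`N`: there is a linear bijection from `E` onto the set of sequences of finite `N`-norm
which realizes the norm of `E` as `N`. -/
def RepSeq (N : (ℕ → ℝ) → ℝ≥0∞) (E : Type*) [NormedAddCommGroup E]
    [NormedSpace ℝ E] : Prop :=
  ∃ J : E →ₗ[ℝ] (ℕ → ℝ), Function.Injective J ∧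
    Set.range J = {x | N x ≠ ⊤} ∧ ∀ e : E, ‖e‖ = (N (J e)).toReal

/-- A Banach space `E` represents the function space on `(S, volume|_S)` (whose elements are
a.e.-equivalence classes of measurable functions) with extended-valued norm functional `N`. -/
def RepFun (S : Set ℝ) (N : (ℝ →ₘ[volume.restrict S] ℝ) → ℝ≥0∞) (E : Type*)
    [NormedAddCommGroup E] [NormedSpace ℝ E] : Prop :=
  ∃ J : E →ₗ[ℝ] (ℝ →ₘ[volume.restrict S] ℝ), Function.Injective J ∧
    Set.range J = {f | N f ≠ ⊤} ∧ ∀ e : E, ‖e‖ = (N (J e)).toReal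

/-- The `Ces_∞(I)` norm on `I = S`: `sup_{x ∈ I, x > 0} (1/x) ∫_0^x |f(t)| dt`. -/
def cesFunNorm (S : Set ℝ) (f : ℝ →ₘ[volume.restrict S] ℝ) : ℝ≥0∞ :=
  ⨆ x : {x : ℝ // x ∈ S ∧ 0 < x},
    (∫⁻ t in Set.Ioc 0 (x : ℝ), ENNReal.ofReal |f t| ∂(volume.restrict S)) /
      ENNReal.ofReal (x : ℝ)

open scoped BoundedContinuousFunction

/-! ### Pełczyński's decomposition method -/

section Pelczynski

variable {V W : Type*} [NormedAddCommGroup V] [NormedSpace ℝ V]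
  [NormedAddCommGroup W] [NormedSpace ℝ W]

/-- The operator `V → ℓ_∞(W)`, `v ↦ (L n v)_n`, assembled from a uniformly bounded sequence of
operators.  Here and below `ℓ_∞(W)` is encoded as `ℕ →ᵇ W`. -/
def boundedFamily (L : ℕ → V →L[ℝ] W) (C : ℝ) (h : ∀ n v, ‖L n v‖ ≤ C * ‖v‖) :
    V →L[ℝ] (ℕ →ᵇ W) :=
  LinearMap.mkContinuous
    { toFun := fun v => BoundedContinuousFunction.ofNormedAddCommGroupDiscrete
        (fun n => L n v) (C * ‖v‖) (fun n => h n v)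
      map_add' := fun v w => by ext n; simp
      map_smul' := fun c v => by ext n; simp }
    |C| (fun v => by
      refine (BoundedContinuousFunction.norm_le (by positivity)).2 fun n => ?_
      exact (h n v).trans (mul_le_mul_of_nonneg_right (le_abs_self C) (norm_nonneg v)))

@[simp] lemma boundedFamily_apply (L : ℕ → V →L[ℝ] W) (C : ℝ) (h : ∀ n v, ‖L n v‖ ≤ C * ‖v‖)
    (v : V) (n : ℕ) : boundedFamily L C h v n = L n v := rfl

/-- Evaluation of a bounded sequence at an index. -/
def evalAt (W : Type*) [NormedAddCommGroup W] [NormedSpace ℝ W] (n : ℕ) :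
    (ℕ →ᵇ W) →L[ℝ] W := BoundedContinuousFunction.evalCLM ℝ n

@[simp] lemma evalAt_apply (n : ℕ) (f : ℕ →ᵇ W) : evalAt W n f = f n := rfl

lemma norm_apply_le {W : Type*} [NormedAddCommGroup W] (n : ℕ) (f : ℕ →ᵇ W) : ‖f n‖ ≤ ‖f‖ := f.norm_coe_le_norm n

/-- Re-indexing by the pairing function identifies `ℓ_∞(W)` with `ℓ_∞(ℓ_∞(W))`. -/
def curryEquiv (W : Type*) [NormedAddCommGroup W] [NormedSpace ℝ W] :
    (ℕ →ᵇ W) ≃L[ℝ] (ℕ →ᵇ (ℕ →ᵇ W)) :=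
  ContinuousLinearEquiv.equivOfInverse
    (boundedFamily (fun j => boundedFamily (fun k => evalAt W (Nat.pair j k)) 1
        (fun k f => by simpa using norm_apply_le _ f)) 1
      (fun j f => by
        refine (BoundedContinuousFunction.norm_le (by positivity)).2 fun k => ?_
        simpa using norm_apply_le _ f))
    (boundedFamily (fun m => (evalAt W m.unpair.2).comp (evalAt (ℕ →ᵇ W) m.unpair.1)) 1
      (fun m f => by
        simpa using (norm_apply_le _ _).trans (norm_apply_le _ f)))
    (fun f => by ext m; simp)
    (fun f => by ext j k; simp)

/-- The Eilenberg swindle: if `W` is a complemented subspace of `V` (embedding `j`, retraction `q`),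
then `ℓ_∞(V) ≃ ℓ_∞(V) × W`, by shifting the `W`-components by one place. -/
def swindle (j : W →L[ℝ] V) (q : V →L[ℝ] W) (hqj : ∀ w, q (j w) = w) :
    ((ℕ →ᵇ V) × W) ≃L[ℝ] (ℕ →ᵇ V) :=
  ContinuousLinearEquiv.equivOfInverse
    (boundedFamily
      (fun n => (ContinuousLinearMap.id ℝ V - j.comp q).comp
          ((evalAt V n).comp (ContinuousLinearMap.fst ℝ _ _)) +
        Nat.casesOn n (j.comp (ContinuousLinearMap.snd ℝ _ _))
          (fun m => (j.comp q).comp ((evalAt V m).comp (ContinuousLinearMap.fst ℝ _ _))))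
      (‖ContinuousLinearMap.id ℝ V - j.comp q‖ + (‖j‖ + ‖j.comp q‖))
      (fun n v => by
        have h1 : ‖v.1‖ ≤ ‖v‖ := norm_fst_le v
        have h2 : ‖v.2‖ ≤ ‖v‖ := norm_snd_le v
        rw [_root_.add_apply, add_mul]
        refine (norm_add_le _ _).trans (add_le_add ?_ ?_)
        · exact ContinuousLinearMap.le_opNorm_of_le (ContinuousLinearMap.id ℝ V - j.comp q)
            ((norm_apply_le n v.1).trans h1)
        · rw [add_mul]
          cases n with
          | zero =>
            exact (ContinuousLinearMap.le_opNorm_of_le j h2).trans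
              (le_add_of_nonneg_right (by positivity))
          | succ m =>
            exact (ContinuousLinearMap.le_opNorm_of_le (j.comp q)
              ((norm_apply_le m v.1).trans h1)).trans (le_add_of_nonneg_left (by positivity))))
    (ContinuousLinearMap.prod
      (boundedFamily
        (fun n => (ContinuousLinearMap.id ℝ V - j.comp q).comp (evalAt V n) +
          (j.comp q).comp (evalAt V (n + 1)))
        (‖ContinuousLinearMap.id ℝ V - j.comp q‖ + ‖j.comp q‖)
        (fun n v => by
          rw [_root_.add_apply, add_mul]
          exact (norm_add_le _ _).trans (add_le_add
            (ContinuousLinearMap.le_opNorm_of_le (ContinuousLinearMap.id ℝ V - j.comp q)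
              (norm_apply_le n v))
            (ContinuousLinearMap.le_opNorm_of_le (j.comp q) (norm_apply_le (n + 1) v)))))
      (q.comp (evalAt V 0)))
    (fun v => by
      refine Prod.ext ?_ ?_
      · ext n
        cases n <;> simp [hqj]
      · simp [hqj])
    (fun v => by
      ext n
      cases n <;> simp [hqj])

/-- Pełczyński's decomposition method: if `V ≃ ℓ_∞(V)` and `V`, `W` are complemented in each
other, then `V ≃ W`.  Indeed `W ≃ V × B ≃ V × V × B ≃ V × W ≃ V`. -/
lemma pelczynski (e : V ≃L[ℝ] (ℕ →ᵇ V))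
    (i : V →L[ℝ] W) (p : W →L[ℝ] V) (hpi : ∀ v, p (i v) = v)
    (j : W →L[ℝ] V) (q : V →L[ℝ] W) (hqj : ∀ w, q (j w) = w) :
    Nonempty (V ≃L[ℝ] W) := by
  have hVW : (V × W) ≃L[ℝ] V :=
    ((e.prodCongr (ContinuousLinearEquiv.refl ℝ W)).trans (swindle j q hqj)).trans e.symm
  have hVV : (V × V) ≃L[ℝ] V :=
    ((e.prodCongr (ContinuousLinearEquiv.refl ℝ V)).trans
      (swindle (ContinuousLinearMap.id ℝ V) (ContinuousLinearMap.id ℝ V) fun _ => rfl)).trans e.symm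
  have hW := ContinuousLinearEquiv.equivOfRightInverse p i hpi
  exact ⟨(hW.trans <| (hVV.symm.prodCongr (ContinuousLinearEquiv.refl ℝ _)).trans <|
    (ContinuousLinearEquiv.prodAssoc ℝ V V _).trans <|
    ((ContinuousLinearEquiv.refl ℝ V).prodCongr hW.symm).trans hVW).symm⟩

end Pelczynski

/-! ### Dyadic martingales and the averaging retraction -/

/-- Lebesgue measure on `[0,1)`. -/
abbrev unitMeasure : Measure ℝ := volume.restrict (Ico 0 1)

/-- The Banach space `L_1[0,1)`. -/
abbrev UnitL1 := ℝ →₁[unitMeasure] ℝ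

instance : IsProbabilityMeasure unitMeasure := ⟨by simp⟩

/-- The index of the dyadic interval `[z / 2^n, (z+1) / 2^n)` that contains `x`. -/
def dyad (n : ℕ) (x : ℝ) : ℤ := ⌊(2 : ℝ) ^ n * x⌋

/-- The dyadic interval `[z / 2^n, (z+1) / 2^n)`. -/
def cell (n : ℕ) (z : ℤ) : Set ℝ := dyad n ⁻¹' {z}

lemma measurable_dyad (n : ℕ) : Measurable (dyad n) :=
  Int.measurable_floor.comp (measurable_const.mul measurable_id)

lemma measurableSet_cell (n : ℕ) (z : ℤ) : MeasurableSet (cell n z) :=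
  measurable_dyad n (measurableSet_singleton z)

lemma dyad_succ_div (n : ℕ) (x : ℝ) : dyad (n + 1) x / 2 = dyad n x := by
  have := Int.natCast_mul_floor_div_cancel (n := 2) (by norm_num) ((2 : ℝ) ^ n * x)
  rw [dyad, dyad, ← this]
  congr 2
  push_cast
  ring

lemma cell_eq_union (n : ℕ) (z : ℤ) :
    cell n z = cell (n + 1) (2 * z) ∪ cell (n + 1) (2 * z + 1) := by
  ext x
  simp only [cell, mem_preimage, mem_singleton_iff, mem_union, ← dyad_succ_div n x]
  omega

lemma disjoint_cell (n : ℕ) {z w : ℤ} (h : z ≠ w) : Disjoint (cell n z) (cell n w) :=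
  Disjoint.preimage _ (by simpa using h)

lemma cell_eq_Ico (n : ℕ) (z : ℤ) :
    cell n z = Ico ((z : ℝ) * ((2 : ℝ) ^ n)⁻¹) (((z : ℝ) + 1) * ((2 : ℝ) ^ n)⁻¹) := by
  ext x
  have h : (0 : ℝ) < 2 ^ n := by positivity
  simp only [cell, dyad, mem_preimage, mem_singleton_iff, Int.floor_eq_iff, mem_Ico,
    ← div_eq_mul_inv, div_le_iff₀ h, lt_div_iff₀ h, mul_comm x]

lemma unitMeasure_cell_of_mem (n : ℕ) {z : ℤ} (h0 : 0 ≤ z) (h1 : z < 2 ^ n) :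
    unitMeasure (cell n z) = ENNReal.ofReal ((2 : ℝ) ^ n)⁻¹ := by
  have h : (0 : ℝ) < 2 ^ n := by positivity
  have h0' : (0 : ℝ) ≤ z := by exact_mod_cast h0
  have h1' : (z : ℝ) + 1 ≤ 2 ^ n := by exact_mod_cast h1
  rw [Measure.restrict_apply (measurableSet_cell n z), inter_eq_left.2, cell_eq_Ico,
    Real.volume_Ico]
  · congr 1; ring
  · rw [cell_eq_Ico]
    refine Ico_subset_Ico (by positivity) ?_
    rwa [← div_eq_mul_inv, div_le_one h]

lemma unitMeasure_cell_of_notMem (n : ℕ) {z : ℤ} (hz : ¬ (0 ≤ z ∧ z < 2 ^ n)) :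
    unitMeasure (cell n z) = 0 := by
  have h : (0 : ℝ) < 2 ^ n := by positivity
  rw [Measure.restrict_apply (measurableSet_cell n z)]
  suffices cell n z ∩ Ico 0 1 = ∅ by simp [this]
  refine eq_empty_of_forall_notMem ?_
  rintro x ⟨hx, h0, h1⟩
  refine hz ?_
  rw [cell, mem_preimage, mem_singleton_iff, dyad] at hx
  subst hx
  refine ⟨Int.floor_nonneg.2 (by positivity), Int.floor_lt.2 ?_⟩
  push_cast
  nlinarith

lemma map_dyad (n : ℕ) : unitMeasure.map (dyad n) =
    ∑ r ∈ Finset.range (2 ^ n), ENNReal.ofReal ((2 : ℝ) ^ n)⁻¹ • Measure.dirac (r : ℤ) := by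
  refine Measure.ext_of_singleton fun z => ?_
  rw [Measure.map_apply (measurable_dyad n) (measurableSet_singleton z)]
  change unitMeasure (cell n z) = _
  simp only [Measure.coe_finsetSum, Finset.sum_apply, Measure.smul_apply, smul_eq_mul,
    Measure.dirac_apply' _ (measurableSet_singleton z)]
  by_cases hz : 0 ≤ z ∧ z < 2 ^ n
  · obtain ⟨r, rfl⟩ := Int.eq_ofNat_of_zero_le hz.1
    have hr : r < 2 ^ n := by exact_mod_cast hz.2
    rw [unitMeasure_cell_of_mem n hz.1 hz.2, Finset.sum_eq_single_of_mem r (Finset.mem_range.2 hr)]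
    · simp
    · intro b _ hb
      simp [hb]
  · rw [unitMeasure_cell_of_notMem n hz, Finset.sum_eq_zero]
    intro r hr
    have : (r : ℤ) ≠ z := by
      rintro rfl
      exact hz ⟨by positivity, by exact_mod_cast Finset.mem_range.1 hr⟩
    simp [this]

lemma integrable_comp_dyad (n : ℕ) (h : ℤ → ℝ) :
    Integrable (fun x => h (dyad n x)) unitMeasure := by
  have : Integrable h (unitMeasure.map (dyad n)) := by
    rw [map_dyad, integrable_finsetSum_measure]
    exact fun r _ => (integrable_dirac (by simp)).smul_measure ENNReal.ofReal_ne_top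
  exact this.comp_measurable (measurable_dyad n)

lemma integral_comp_dyad (n : ℕ) (h : ℤ → ℝ) :
    ∫ x, h (dyad n x) ∂unitMeasure =
      ∑ r ∈ Finset.range (2 ^ n), ((2 : ℝ) ^ n)⁻¹ * h r := by
  rw [← integral_map (f := h) (measurable_dyad n).aemeasurable
    (measurable_of_countable h).aestronglyMeasurable, map_dyad, integral_finsetSum_measure]
  · refine Finset.sum_congr rfl fun r _ => ?_
    rw [integral_smul_measure, integral_dirac, ENNReal.toReal_ofReal (by positivity), smul_eq_mul]
  · exact fun r _ => (integrable_dirac (by simp)).smul_measure ENNReal.ofReal_ne_top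

/-- The filtration of `ℝ` by the dyadic intervals of length `2^{-n}`. -/
def dyadicFiltration : Filtration ℕ (inferInstance : MeasurableSpace ℝ) where
  seq n := MeasurableSpace.comap (dyad n) ⊤
  mono' := monotone_nat_of_le_succ fun n => by
    rintro s ⟨T, -, rfl⟩
    refine ⟨(· / 2) ⁻¹' T, trivial, ?_⟩
    ext x
    simp [dyad_succ_div]
  le' n := (measurable_dyad n).comap_le

lemma iSup_dyadicFiltration :
    ⨆ n, dyadicFiltration n = (inferInstance : MeasurableSpace ℝ) := by
  refine le_antisymm (iSup_le fun n => dyadicFiltration.le n) ?_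
  -- the identity is the pointwise limit of `⌊2^n x⌋ / 2^n`
  have hd (n : ℕ) : @Measurable ℝ ℝ (⨆ n, dyadicFiltration n) _
      (fun x => (dyad n x : ℝ) / 2 ^ n) := by
    have h1 : @Measurable ℝ ℤ (⨆ n, dyadicFiltration n) ⊤ (dyad n) :=
      Measurable.mono (comap_measurable (dyad n)) (le_iSup (fun n => dyadicFiltration n) n) le_rfl
    exact (measurable_from_top (f := fun z : ℤ => (z : ℝ) / 2 ^ n)).comp h1
  have hid : @Measurable ℝ ℝ (⨆ n, dyadicFiltration n) _ (fun x => x) := by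
    refine @measurable_of_tendsto_metrizable ℝ ℝ (⨆ n, dyadicFiltration n) _ _ _ _ _ _ hd ?_
    rw [tendsto_pi_nhds]
    intro x
    rw [tendsto_iff_dist_tendsto_zero]
    refine squeeze_zero (fun _ => dist_nonneg) (fun n => ?_)
      (tendsto_pow_atTop_nhds_zero_of_lt_one (r := (1 / 2 : ℝ)) (by norm_num) (by norm_num))
    have hp : (0 : ℝ) < 2 ^ n := by positivity
    have e : (dyad n x : ℝ) / 2 ^ n - x = (dyad n x - 2 ^ n * x) / 2 ^ n := by field_simp
    have h1 := Int.floor_le ((2 : ℝ) ^ n * x)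
    have h2 := Int.lt_floor_add_one ((2 : ℝ) ^ n * x)
    rw [Real.dist_eq, e, abs_div, abs_of_pos hp, div_pow, one_pow]
    refine div_le_div_of_nonneg_right ?_ hp.le
    rw [dyad, abs_le]
    constructor <;> linarith
  intro s hs
  exact hid hs

/-- A function that is constant on the dyadic intervals of length `2^{-n}` and has the same
integrals over them as `f` is the conditional expectation of `f`. -/
lemma comp_dyad_ae_eq_condExp (n : ℕ) {f : ℝ → ℝ} (hf : Integrable f unitMeasure) (G : ℤ → ℝ)
    (h : ∀ z, ∫ x in cell n z, f x ∂unitMeasure = unitMeasure.real (cell n z) * G z) :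
    (fun x => G (dyad n x)) =ᵐ[unitMeasure] unitMeasure[f | dyadicFiltration n] := by
  have hG := integrable_comp_dyad n G
  refine ae_eq_condExp_of_forall_setIntegral_eq (dyadicFiltration.le n) hf
    (fun s _ _ => hG.integrableOn) ?_ ?_
  · rintro s ⟨T, -, rfl⟩ -
    have hs : dyad n ⁻¹' T = ⋃ z : T, cell n z := by
      ext x; simp [cell]
    have hd : Pairwise (Function.onFun Disjoint fun z : T => cell n z) := fun z w hzw =>
      disjoint_cell n (fun e => hzw (Subtype.ext e))
    have hm : ∀ z : T, MeasurableSet (cell n z) := fun z => measurableSet_cell n z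
    rw [hs, integral_iUnion hm hd hG.integrableOn, integral_iUnion hm hd hf.integrableOn]
    refine tsum_congr fun z => ?_
    rw [h z, setIntegral_congr_fun (g := fun _ => G z) (measurableSet_cell n z), setIntegral_const,
      smul_eq_mul]
    intro x hx
    exact congrArg G hx
  · refine StronglyMeasurable.aestronglyMeasurable (Measurable.stronglyMeasurable ?_)
    exact (measurable_from_top (f := G)).comp (comap_measurable (dyad n))

lemma abs_setIntegral_le (f : UnitL1) (s : Set ℝ) :
    |∫ x in s, f x ∂unitMeasure| ≤ ‖f‖ := by
  rw [L1.norm_eq_integral_norm, ← Real.norm_eq_abs]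
  refine (norm_integral_le_integral_norm _).trans ?_
  exact setIntegral_le_integral (L1.integrable_coeFn f).norm (ae_of_all _ fun x => norm_nonneg _)

lemma sum_abs_integral_cell_le (n : ℕ) (f : UnitL1) :
    ∑ r ∈ Finset.range (2 ^ n), |∫ x in cell n r, f x ∂unitMeasure| ≤ ‖f‖ := by
  have hf := L1.integrable_coeFn f
  calc ∑ r ∈ Finset.range (2 ^ n), |∫ x in cell n r, f x ∂unitMeasure|
      ≤ ∑ r ∈ Finset.range (2 ^ n), ∫ x in cell n r, ‖f x‖ ∂unitMeasure :=
        Finset.sum_le_sum fun r _ => by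
          simpa only [Real.norm_eq_abs] using norm_integral_le_integral_norm (f : ℝ → ℝ)
    _ = ∫ x in ⋃ r ∈ Finset.range (2 ^ n), cell n r, ‖f x‖ ∂unitMeasure := by
        refine (integral_biUnion_finset (s := fun r : ℕ => cell n r) _ (fun r _ => measurableSet_cell n r) ?_
          (fun r _ => hf.norm.integrableOn)).symm
        intro r _ s _ hrs
        exact disjoint_cell n (by exact_mod_cast hrs)
    _ ≤ ‖f‖ := by
        rw [L1.norm_eq_integral_norm]
        exact setIntegral_le_integral hf.norm (ae_of_all _ fun x => norm_nonneg _)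

/-- The limit, along a fixed free ultrafilter, of the masses that the terms of a bounded sequence in
`L_1[0,1)` give to a dyadic interval. -/
def limMass (φ : ℕ →ᵇ UnitL1) (n : ℕ) (z : ℤ) : ℝ :=
  limUnder (hyperfilter ℕ : Filter ℕ) fun k => ∫ x in cell n z, φ k x ∂unitMeasure

lemma tendsto_limMass (φ : ℕ →ᵇ UnitL1) (n : ℕ) (z : ℤ) :
    Tendsto (fun k => ∫ x in cell n z, φ k x ∂unitMeasure) (hyperfilter ℕ : Filter ℕ)
      (𝓝 (limMass φ n z)) := by
  refine tendsto_nhds_limUnder ?_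
  have hmem : ∀ k, ∫ x in cell n z, φ k x ∂unitMeasure ∈ Icc (-‖φ‖) ‖φ‖ := fun k =>
    abs_le.1 ((abs_setIntegral_le (φ k) _).trans (norm_apply_le k φ))
  obtain ⟨l, -, hl⟩ := (isCompact_Icc (a := -‖φ‖) (b := ‖φ‖)).ultrafilter_le_nhds
    ((hyperfilter ℕ).map fun k => ∫ x in cell n z, φ k x ∂unitMeasure)
    (by
      rw [le_principal_iff]
      exact Filter.mem_map.2 (Filter.univ_mem' hmem))
  exact ⟨l, hl⟩

lemma limMass_eq_of_tendsto {φ : ℕ →ᵇ UnitL1} {n : ℕ} {z : ℤ} {l : ℝ}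
    (h : Tendsto (fun k => ∫ x in cell n z, φ k x ∂unitMeasure) (hyperfilter ℕ : Filter ℕ)
      (𝓝 l)) : limMass φ n z = l :=
  tendsto_nhds_unique (tendsto_limMass φ n z) h

lemma limMass_add (φ ψ : ℕ →ᵇ UnitL1) (n : ℕ) (z : ℤ) :
    limMass (φ + ψ) n z = limMass φ n z + limMass ψ n z := by
  refine limMass_eq_of_tendsto (((tendsto_limMass φ n z).add (tendsto_limMass ψ n z)).congr
    fun k => ?_)
  rw [← integral_add (L1.integrable_coeFn _).integrableOn (L1.integrable_coeFn _).integrableOn]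
  exact integral_congr_ae (ae_restrict_of_ae (Lp.coeFn_add (φ k) (ψ k)).symm)

lemma limMass_smul (c : ℝ) (φ : ℕ →ᵇ UnitL1) (n : ℕ) (z : ℤ) :
    limMass (c • φ) n z = c * limMass φ n z := by
  refine limMass_eq_of_tendsto (((tendsto_limMass φ n z).const_mul c).congr fun k => ?_)
  rw [← integral_const_mul]
  exact integral_congr_ae (ae_restrict_of_ae (Lp.coeFn_smul c (φ k)).symm)

lemma limMass_split (φ : ℕ →ᵇ UnitL1) (n : ℕ) (z : ℤ) :
    limMass φ n z = limMass φ (n + 1) (2 * z) + limMass φ (n + 1) (2 * z + 1) := by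
  refine limMass_eq_of_tendsto (((tendsto_limMass φ (n + 1) (2 * z)).add
    (tendsto_limMass φ (n + 1) (2 * z + 1))).congr fun k => ?_)
  rw [cell_eq_union n z, setIntegral_union (disjoint_cell _ (by omega)) (measurableSet_cell _ _)
    (L1.integrable_coeFn _).integrableOn (L1.integrable_coeFn _).integrableOn]

/-- The density of `limMass` at level `n`; on a null interval it is the junk value `0`. -/
def limDensity (φ : ℕ →ᵇ UnitL1) (n : ℕ) (z : ℤ) : ℝ :=
  limMass φ n z / unitMeasure.real (cell n z)

lemma measure_mul_limDensity (φ : ℕ →ᵇ UnitL1) (n : ℕ) (z : ℤ) :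
    unitMeasure.real (cell n z) * limDensity φ n z = limMass φ n z := by
  by_cases h : unitMeasure.real (cell n z) = 0
  · rw [h, zero_mul]
    refine (limMass_eq_of_tendsto (tendsto_const_nhds.congr fun k => ?_)).symm
    rw [Measure.restrict_zero_set ((measureReal_eq_zero_iff).1 h), integral_zero_measure]
  · exact mul_div_cancel₀ _ h

lemma setIntegral_limDensity (φ : ℕ →ᵇ UnitL1) (n : ℕ) (z : ℤ) :
    ∫ x in cell n z, limDensity φ n (dyad n x) ∂unitMeasure = limMass φ n z := by
  rw [setIntegral_congr_fun (g := fun _ => limDensity φ n z) (measurableSet_cell n z),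
    setIntegral_const, smul_eq_mul, measure_mul_limDensity]
  intro x hx
  exact congrArg (limDensity φ n) hx

lemma martingale_limDensity (φ : ℕ →ᵇ UnitL1) :
    Martingale (fun n x => limDensity φ n (dyad n x)) dyadicFiltration unitMeasure := by
  refine martingale_nat (fun n => Measurable.stronglyMeasurable ?_)
    (fun n => integrable_comp_dyad n _) (fun n => ?_)
  · exact (measurable_from_top (f := limDensity φ n)).comp (comap_measurable (dyad n))
  · refine comp_dyad_ae_eq_condExp n (integrable_comp_dyad (n + 1) _) _ fun z => ?_
    rw [measure_mul_limDensity, limMass_split, cell_eq_union n z,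
      setIntegral_union (disjoint_cell _ (by omega)) (measurableSet_cell _ _)
        (integrable_comp_dyad _ _).integrableOn (integrable_comp_dyad _ _).integrableOn,
      setIntegral_limDensity, setIntegral_limDensity]

lemma eLpNorm_limDensity_le (φ : ℕ →ᵇ UnitL1) (n : ℕ) :
    eLpNorm (fun x => limDensity φ n (dyad n x)) 1 unitMeasure ≤ ENNReal.ofReal ‖φ‖ := by
  have hi := integrable_comp_dyad n (limDensity φ n)
  rw [eLpNorm_one_eq_lintegral_enorm, ← ofReal_integral_norm_eq_lintegral_enorm hi]
  refine ENNReal.ofReal_le_ofReal ?_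
  rw [integral_comp_dyad n (fun z => ‖limDensity φ n z‖)]
  have h1 : ∀ r ∈ Finset.range (2 ^ n),
      ((2 : ℝ) ^ n)⁻¹ * ‖limDensity φ n r‖ = |limMass φ n r| := fun r hr => by
    rw [← measure_mul_limDensity, abs_mul, measureReal_def, unitMeasure_cell_of_mem n
      (by positivity) (by exact_mod_cast Finset.mem_range.1 hr),
      ENNReal.toReal_ofReal (by positivity), abs_of_nonneg (by positivity), Real.norm_eq_abs]
  rw [Finset.sum_congr rfl h1]
  refine le_of_tendsto (tendsto_finsetSum _ fun r _ => (tendsto_limMass φ n r).abs)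
    (Eventually.of_forall fun k => ?_)
  exact (sum_abs_integral_cell_le n (φ k)).trans (norm_apply_le k φ)

/-- Doob's convergence theorem produces the density of the absolutely continuous part of the weak
limit of `φ`. -/
lemma exists_limit (φ : ℕ →ᵇ UnitL1) : ∃ u : UnitL1,
    (∀ᵐ x ∂unitMeasure, Tendsto (fun n => limDensity φ n (dyad n x)) atTop (𝓝 (u x))) ∧
      ‖u‖ ≤ ‖φ‖ := by
  have hM := martingale_limDensity φ
  have hb : ∀ n, eLpNorm (fun x => limDensity φ n (dyad n x)) 1 unitMeasure ≤
      (Real.toNNReal ‖φ‖ : ℝ≥0∞) := eLpNorm_limDensity_le φ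
  have ht := hM.submartingale.ae_tendsto_limitProcess hb
  have hL := hM.submartingale.memLp_limitProcess hb
  refine ⟨hL.toLp _, ?_, ?_⟩
  · filter_upwards [ht, hL.coeFn_toLp] with x h1 h2
    rwa [h2]
  · rw [Lp.norm_toLp]
    refine ENNReal.toReal_le_of_le_ofReal (norm_nonneg _) ?_
    refine (Lp.eLpNorm_lim_le_liminf_eLpNorm (fun n =>
      (integrable_comp_dyad n _).aestronglyMeasurable) _ ht).trans ?_
    refine (liminf_le_liminf (Eventually.of_forall (eLpNorm_limDensity_le φ))).trans ?_
    simp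

/-- A bounded retraction `ℓ_∞(L_1) → L_1` that recovers `f` from every sequence whose integrals over
each dyadic interval converge to those of `f`. -/
lemma exists_retraction : ∃ R : (ℕ →ᵇ UnitL1) →L[ℝ] UnitL1, ∀ (φ : ℕ →ᵇ UnitL1) (f : UnitL1),
    (∀ n z, Tendsto (fun k => ∫ x in cell n z, φ k x ∂unitMeasure) atTop
      (𝓝 (∫ x in cell n z, f x ∂unitMeasure))) → R φ = f := by
  choose R hR hRn using exists_limit
  refine ⟨LinearMap.mkContinuous
    { toFun := R
      map_add' := fun φ ψ => ?_
      map_smul' := fun c φ => ?_ } 1 (fun φ => by simpa using hRn φ), fun φ f h => ?_⟩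
  · refine Lp.ext ?_
    filter_upwards [hR (φ + ψ), hR φ, hR ψ, Lp.coeFn_add (R φ) (R ψ)] with x h1 h2 h3 h4
    rw [h4]
    refine tendsto_nhds_unique h1 ((h2.add h3).congr fun n => ?_)
    rw [limDensity, limDensity, limDensity, limMass_add, add_div]
  · refine Lp.ext ?_
    filter_upwards [hR (c • φ), hR φ, Lp.coeFn_smul c (R φ)] with x h1 h2 h4
    rw [RingHom.id_apply, h4]
    refine tendsto_nhds_unique h1 ((h2.const_mul c).congr fun n => ?_)
    rw [limDensity, limDensity, limMass_smul, mul_div_assoc]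
  · change R φ = f
    have hm : ∀ n z, limMass φ n z = ∫ x in cell n z, f x ∂unitMeasure := fun n z =>
      limMass_eq_of_tendsto ((h n z).mono_left
        (Nat.cofinite_eq_atTop ▸ hyperfilter_le_cofinite))
    have hf := L1.integrable_coeFn f
    have hc : ∀ᵐ x ∂unitMeasure, ∀ n, limDensity φ n (dyad n x) =
        (unitMeasure[f | dyadicFiltration n]) x := ae_all_iff.2 fun n =>
      comp_dyad_ae_eq_condExp n hf _ fun z => by rw [measure_mul_limDensity, hm]
    have hlevy := tendsto_ae_condExp (μ := unitMeasure) (ℱ := dyadicFiltration) f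
    rw [iSup_dyadicFiltration, condExp_of_stronglyMeasurable le_rfl
      (Lp.stronglyMeasurable f) hf] at hlevy
    refine Lp.ext ?_
    filter_upwards [hR φ, hc, hlevy] with x h1 h2 h3
    exact tendsto_nhds_unique h1 (h3.congr fun n => (h2 n).symm)

/-! ### Dyadic blocks of sequences -/

lemma sum_abs_le_cesNorm {y : ℕ → ℝ} (hy : cesNorm y ≠ ⊤) (n : ℕ) :
    ∑ k ∈ Finset.range (n + 1), |y k| ≤ ((n : ℝ) + 1) * (cesNorm y).toReal := by
  have h : (∑ k ∈ Finset.range (n + 1), ENNReal.ofReal |y k|) / ((n : ℝ≥0∞) + 1) ≤ cesNorm y :=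
    le_iSup (fun n : ℕ =>
      (∑ k ∈ Finset.range (n + 1), ENNReal.ofReal |y k|) / ((n : ℝ≥0∞) + 1)) n
  rw [ENNReal.div_le_iff (by positivity) (by finiteness)] at h
  have h' := ENNReal.toReal_mono (by finiteness) h
  rw [ENNReal.toReal_sum (by finiteness), ENNReal.toReal_mul,
    ENNReal.toReal_add (by finiteness) (by finiteness)] at h'
  simpa [mul_comm] using h'

/-- The `m`-th dyadic block of a sequence `y`, that is, its terms with (0-based) indices
`2^m - 1, …, 2^{m+1} - 2`, spread as a step function over the dyadic intervals of `[0,1)`. -/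
def block (m : ℕ) (y : ℕ → ℝ) (x : ℝ) : ℝ := y (2 ^ m - 1 + (dyad m x).toNat)

lemma integrable_block (m : ℕ) (y : ℕ → ℝ) : Integrable (block m y) unitMeasure :=
  integrable_comp_dyad m (fun z => y (2 ^ m - 1 + z.toNat))

/-- `block` as a linear map into `L_1[0,1)`. -/
def blockL1 (m : ℕ) : (ℕ → ℝ) →ₗ[ℝ] UnitL1 where
  toFun y := (integrable_block m y).toL1
  map_add' _ _ := rfl
  map_smul' _ _ := rfl

lemma coeFn_blockL1 (m : ℕ) (y : ℕ → ℝ) : blockL1 m y =ᵐ[unitMeasure] block m y :=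
  (integrable_block m y).coeFn_toL1

lemma norm_blockL1 (m : ℕ) (y : ℕ → ℝ) :
    ‖blockL1 m y‖ = ((2 : ℝ) ^ m)⁻¹ * ∑ r ∈ Finset.range (2 ^ m), |y (2 ^ m - 1 + r)| := by
  have h : ‖blockL1 m y‖ = ∫ x, ‖block m y x‖ ∂unitMeasure := by
    rw [L1.norm_eq_integral_norm]
    exact integral_congr_ae ((coeFn_blockL1 m y).fun_comp _)
  rw [h, Finset.mul_sum]
  exact integral_comp_dyad m (fun z => ‖y (2 ^ m - 1 + z.toNat)‖)

lemma norm_blockL1_le {y : ℕ → ℝ} (hy : cesNorm y ≠ ⊤) (m : ℕ) :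
    ‖blockL1 m y‖ ≤ 2 * (cesNorm y).toReal := by
  have hp : (0 : ℝ) < 2 ^ m := by positivity
  have hp' : 1 ≤ 2 ^ m := Nat.one_le_two_pow
  rw [norm_blockL1, inv_mul_le_iff₀ hp]
  have h := sum_abs_le_cesNorm hy (2 ^ m - 1 + 2 ^ m - 1)
  have e : 2 ^ m - 1 + 2 ^ m - 1 + 1 = (2 ^ m - 1) + 2 ^ m := by omega
  rw [e, Finset.sum_range_add] at h
  have h0 : 0 ≤ ∑ k ∈ Finset.range (2 ^ m - 1), |y k| := Finset.sum_nonneg fun _ _ => abs_nonneg _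
  have h1 : (((2 ^ m - 1 + 2 ^ m - 1 : ℕ) : ℝ) + 1) ≤ 2 ^ m * 2 := by
    have : 2 ^ m - 1 + 2 ^ m - 1 + 1 ≤ 2 ^ m * 2 := by omega
    exact_mod_cast this
  have h2 := mul_le_mul_of_nonneg_right h1 (ENNReal.toReal_nonneg (a := cesNorm y))
  linarith

lemma sum_range_two_pow_sub_one (a : ℕ → ℝ) (M : ℕ) :
    ∑ k ∈ Finset.range (2 ^ M - 1), a k =
      ∑ m ∈ Finset.range M, ∑ r ∈ Finset.range (2 ^ m), a (2 ^ m - 1 + r) := by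
  induction M with
  | zero => simp
  | succ M ih =>
    have e : 2 ^ (M + 1) - 1 = (2 ^ M - 1) + 2 ^ M := by
      have : 1 ≤ 2 ^ M := Nat.one_le_two_pow
      rw [pow_succ]; omega
    rw [e, Finset.sum_range_add, ih, Finset.sum_range_succ _ M]

lemma cesNorm_le_of_blocks {y : ℕ → ℝ} {C : ℝ}
    (h : ∀ m, ∑ r ∈ Finset.range (2 ^ m), |y (2 ^ m - 1 + r)| ≤ 2 ^ m * C) :
    cesNorm y ≤ ENNReal.ofReal (2 * C) := by
  have hC : 0 ≤ C := by
    have := (Finset.sum_nonneg fun _ _ => abs_nonneg _).trans (h 0)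
    simpa using this
  refine iSup_le fun n => ?_
  rw [ENNReal.div_le_iff (by positivity) (by finiteness),
    ← ENNReal.ofReal_sum_of_nonneg fun _ _ => abs_nonneg _]
  have hn : ((n : ℝ≥0∞) + 1) = ENNReal.ofReal ((n : ℝ) + 1) := by
    rw [ENNReal.ofReal_add (by positivity) (by positivity)]; simp
  rw [hn, ← ENNReal.ofReal_mul (by positivity)]
  refine ENNReal.ofReal_le_ofReal ?_
  set M := Nat.log 2 (n + 1) with hM
  have h1 : 2 ^ M ≤ n + 1 := Nat.pow_log_le_self 2 (by omega)
  have h2 : n + 1 < 2 ^ (M + 1) := Nat.lt_pow_succ_log_self (by norm_num) _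
  have hgeom : ∑ m ∈ Finset.range (M + 1), (2 : ℝ) ^ m ≤ 2 * ((n : ℝ) + 1) := by
    rw [geom_sum_eq (by norm_num)]
    have : (2 : ℝ) ^ M ≤ n + 1 := by exact_mod_cast h1
    rw [pow_succ]; linarith
  calc ∑ k ∈ Finset.range (n + 1), |y k|
      ≤ ∑ k ∈ Finset.range (2 ^ (M + 1) - 1), |y k| :=
        Finset.sum_le_sum_of_subset_of_nonneg (Finset.range_mono (by omega))
          fun _ _ _ => abs_nonneg _
    _ ≤ ∑ m ∈ Finset.range (M + 1), 2 ^ m * C := by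
        rw [sum_range_two_pow_sub_one]
        exact Finset.sum_le_sum fun m _ => h m
    _ ≤ 2 * C * ((n : ℝ) + 1) := by
        rw [← Finset.sum_mul]
        nlinarith

/-- The sequence whose `m`-th dyadic block lists the averages of `f m` over the dyadic intervals of
length `2^{-m}`. -/
def averages : (ℕ →ᵇ UnitL1) →ₗ[ℝ] (ℕ → ℝ) where
  toFun f i := (2 : ℝ) ^ Nat.log 2 (i + 1) *
    ∫ x in cell (Nat.log 2 (i + 1)) ((i + 1 - 2 ^ Nat.log 2 (i + 1) : ℕ) : ℤ),
      f (Nat.log 2 (i + 1)) x ∂unitMeasure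
  map_add' f g := by
    ext i
    simp only [Pi.add_apply]
    rw [← mul_add, ← integral_add (L1.integrable_coeFn _).integrableOn
      (L1.integrable_coeFn _).integrableOn]
    congr 1
    exact integral_congr_ae (ae_restrict_of_ae (Lp.coeFn_add _ _))
  map_smul' c f := by
    ext i
    simp only [Pi.smul_apply, smul_eq_mul, RingHom.id_apply]
    rw [mul_left_comm, ← integral_const_mul c]
    congr 1
    exact integral_congr_ae (ae_restrict_of_ae (Lp.coeFn_smul _ _))

lemma averages_apply (f : ℕ →ᵇ UnitL1) (m : ℕ) {r : ℕ} (hr : r < 2 ^ m) :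
    averages f (2 ^ m - 1 + r) = 2 ^ m * ∫ x in cell m r, f m x ∂unitMeasure := by
  have hp : 1 ≤ 2 ^ m := Nat.one_le_two_pow
  have e : 2 ^ m - 1 + r + 1 = 2 ^ m + r := by omega
  have hl : Nat.log 2 (2 ^ m + r) = m :=
    Nat.log_eq_of_pow_le_of_lt_pow (by omega) (by rw [pow_succ]; omega)
  change (2 : ℝ) ^ Nat.log 2 (2 ^ m - 1 + r + 1) * _ = _
  rw [e, hl, Nat.add_sub_cancel_left]

lemma exists_block_index (i : ℕ) : ∃ m r, r < 2 ^ m ∧ i = 2 ^ m - 1 + r := by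
  have h1 : 2 ^ Nat.log 2 (i + 1) ≤ i + 1 := Nat.pow_log_le_self 2 (by omega)
  have h2 : i + 1 < 2 ^ (Nat.log 2 (i + 1) + 1) := Nat.lt_pow_succ_log_self (by norm_num) _
  have hp : 1 ≤ 2 ^ Nat.log 2 (i + 1) := Nat.one_le_two_pow
  rw [pow_succ] at h2
  exact ⟨Nat.log 2 (i + 1), i + 1 - 2 ^ Nat.log 2 (i + 1), by omega, by omega⟩

lemma cesNorm_averages_le (f : ℕ →ᵇ UnitL1) :
    cesNorm (averages f) ≤ ENNReal.ofReal (2 * ‖f‖) := by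
  refine cesNorm_le_of_blocks fun m => ?_
  calc ∑ r ∈ Finset.range (2 ^ m), |averages f (2 ^ m - 1 + r)|
      = ∑ r ∈ Finset.range (2 ^ m), 2 ^ m * |∫ x in cell m r, f m x ∂unitMeasure| := by
        refine Finset.sum_congr rfl fun r hr => ?_
        rw [averages_apply f m (Finset.mem_range.1 hr), abs_mul, abs_of_pos (by positivity)]
    _ ≤ 2 ^ m * ‖f‖ := by
        rw [← Finset.mul_sum]
        exact mul_le_mul_of_nonneg_left ((sum_abs_integral_cell_le m (f m)).trans
          (norm_apply_le m f)) (by positivity)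

lemma measureReal_cell (m : ℕ) {r : ℕ} (hr : r < 2 ^ m) :
    unitMeasure.real (cell m r) = ((2 : ℝ) ^ m)⁻¹ := by
  rw [measureReal_def, unitMeasure_cell_of_mem m (by positivity) (by exact_mod_cast hr),
    ENNReal.toReal_ofReal (by positivity)]

lemma averages_of_blocks {y : ℕ → ℝ} {f : ℕ →ᵇ UnitL1} (hf : ∀ m, f m = blockL1 m y) :
    averages f = y := by
  ext i
  obtain ⟨m, r, hr, rfl⟩ := exists_block_index i
  rw [averages_apply f m hr, hf, integral_congr_ae (ae_restrict_of_ae (coeFn_blockL1 m y)),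
    setIntegral_congr_fun (g := fun _ => y (2 ^ m - 1 + r)) (measurableSet_cell m r),
    setIntegral_const, measureReal_cell m hr, smul_eq_mul, mul_inv_cancel_left₀ (by positivity)]
  intro x hx
  have hx' : dyad m x = r := hx
  simp only [block, hx', Int.toNat_natCast]

/-- Passing to averages at level `m` does not change integrals over coarser dyadic intervals. -/
lemma setIntegral_blockL1_averages (f : ℕ →ᵇ UnitL1) {n m : ℕ} (hnm : n ≤ m) (z : ℤ) :
    ∫ x in cell n z, blockL1 m (averages f) x ∂unitMeasure =
      ∫ x in cell n z, f m x ∂unitMeasure := by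
  have hf := L1.integrable_coeFn (f m)
  have hc : block m (averages f) =ᵐ[unitMeasure] unitMeasure[f m | dyadicFiltration m] := by
    refine comp_dyad_ae_eq_condExp m hf (fun z => averages f (2 ^ m - 1 + z.toNat)) fun z => ?_
    by_cases hz : 0 ≤ z ∧ z < 2 ^ m
    · obtain ⟨r, rfl⟩ := Int.eq_ofNat_of_zero_le hz.1
      have hr : r < 2 ^ m := by exact_mod_cast hz.2
      rw [Int.toNat_natCast, averages_apply f m hr, measureReal_cell m hr,
        inv_mul_cancel_left₀ (by positivity)]
    · have h0 := unitMeasure_cell_of_notMem m hz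
      rw [Measure.restrict_zero_set h0, integral_zero_measure, measureReal_def, h0]
      simp
  rw [integral_congr_ae (ae_restrict_of_ae ((coeFn_blockL1 m _).trans hc))]
  exact setIntegral_condExp (dyadicFiltration.le m) hf
    (dyadicFiltration.mono hnm _ ⟨{z}, trivial, rfl⟩)

/-- The Cesàro sequence space is isomorphic to `ℓ_∞(L_1[0,1))`. -/
lemma nonempty_equiv_of_repSeq (F : Type*) [NormedAddCommGroup F] [NormedSpace ℝ F]
    (hF : RepSeq cesNorm F) : Nonempty ((ℕ →ᵇ UnitL1) ≃L[ℝ] F) := by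
  obtain ⟨J, hJ, hrange, hnorm⟩ := hF
  have hfin : ∀ y, cesNorm (J y) ≠ ⊤ := fun y => by
    have : J y ∈ {x | cesNorm x ≠ ⊤} := hrange ▸ mem_range_self y
    exact this
  have hsurj : ∀ f : ℕ →ᵇ UnitL1, ∃ y, J y = averages f := fun f => by
    have : averages f ∈ range J := by
      rw [hrange]
      exact ne_top_of_le_ne_top ENNReal.ofReal_ne_top (cesNorm_averages_le f)
    exact this
  choose a ha using hsurj
  let A : (ℕ →ᵇ UnitL1) →L[ℝ] F := LinearMap.mkContinuous
    { toFun := a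
      map_add' := fun f g => hJ (by simp [ha])
      map_smul' := fun c f => hJ (by simp [ha]) } 2 (fun f => by
        change ‖a f‖ ≤ _
        rw [hnorm, ha]
        exact ENNReal.toReal_le_of_le_ofReal (by positivity) (cesNorm_averages_le f))
  have hA : ∀ f, J (A f) = averages f := ha
  let B : F →L[ℝ] (ℕ →ᵇ UnitL1) := boundedFamily
    (fun m => LinearMap.mkContinuous ((blockL1 m).comp J) 2 (fun y => by
      rw [hnorm]; exact norm_blockL1_le (hfin y) m)) 2 (fun m y => by
      rw [hnorm]; exact norm_blockL1_le (hfin y) m)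
  have hB : ∀ y m, B y m = blockL1 m (J y) := fun y m => rfl
  obtain ⟨R, hR⟩ := exists_retraction
  -- every term of `f` is repeated infinitely often, so that arbitrarily fine averages of it occur
  let D : (ℕ →ᵇ UnitL1) →L[ℝ] (ℕ →ᵇ UnitL1) :=
    boundedFamily (fun m => evalAt UnitL1 m.unpair.1) 1 (fun m f => by
      simpa using norm_apply_le _ f)
  let R' : (ℕ →ᵇ (ℕ →ᵇ UnitL1)) →L[ℝ] (ℕ →ᵇ UnitL1) :=
    boundedFamily (fun j => R.comp (evalAt _ j)) ‖R‖ (fun j f =>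
      ContinuousLinearMap.le_opNorm_of_le R (norm_apply_le j f))
  refine pelczynski (curryEquiv UnitL1) (A.comp D)
    (R'.comp ((curryEquiv UnitL1 : (ℕ →ᵇ UnitL1) →L[ℝ] (ℕ →ᵇ (ℕ →ᵇ UnitL1))).comp B))
    (fun f => ?_) B A (fun y => hJ ?_)
  · ext1 j
    refine hR _ _ fun n z => ?_
    refine tendsto_const_nhds.congr' ?_
    filter_upwards [eventually_ge_atTop n] with k hk
    change _ = ∫ x in cell n z, B (A (D f)) (Nat.pair j k) x ∂unitMeasure
    rw [hB, hA, setIntegral_blockL1_averages _ (hk.trans (Nat.right_le_pair j k))]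
    change _ = ∫ x in cell n z, f (Nat.pair j k).unpair.1 x ∂unitMeasure
    rw [Nat.unpair_pair]
  · rw [hA]
    exact averages_of_blocks fun m => hB y m

/-! ### Dyadic blocks of functions -/

/-- The affine map of `[0,1)` onto the dyadic block `[2^k, 2^{k+1})`. -/
def dil (k : ℤ) (t : ℝ) : ℝ := 2 ^ k * (1 + t)

lemma measurable_dil (k : ℤ) : Measurable (dil k) :=
  measurable_const.mul (measurable_const.add measurable_id)

lemma dil_mem_iff (k : ℤ) (t : ℝ) :
    dil k t ∈ Ico ((2 : ℝ) ^ k) (2 ^ (k + 1)) ↔ t ∈ Ico (0 : ℝ) 1 := by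
  have hp : (0 : ℝ) < 2 ^ k := by positivity
  rw [zpow_add_one₀ (by norm_num), dil, mem_Ico, mem_Ico, le_mul_iff_one_le_right hp,
    mul_lt_mul_iff_right₀ hp]
  constructor <;> rintro ⟨h1, h2⟩ <;> constructor <;> linarith

lemma map_dil (k : ℤ) : unitMeasure.map (dil k) =
    ENNReal.ofReal ((2 : ℝ) ^ k)⁻¹ • volume.restrict (Ico ((2 : ℝ) ^ k) (2 ^ (k + 1))) := by
  have hp : (0 : ℝ) < 2 ^ k := by positivity
  have hv : (volume : Measure ℝ).map (dil k) = ENNReal.ofReal ((2 : ℝ) ^ k)⁻¹ • volume := by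
    have : dil k = (fun x => (2 : ℝ) ^ k * x) ∘ (fun t => 1 + t) := rfl
    rw [this, ← Measure.map_map (by fun_prop) (by fun_prop), map_add_left_eq_self,
      Real.map_volume_mul_left hp.ne', abs_of_pos (by positivity)]
  have hpre : dil k ⁻¹' Ico ((2 : ℝ) ^ k) (2 ^ (k + 1)) = Ico 0 1 := by
    ext t; exact dil_mem_iff k t
  rw [unitMeasure, ← hpre, ← Measure.restrict_map (measurable_dil k) measurableSet_Ico, hv,
    Measure.restrict_smul]

section

variable {S : Set ℝ} {k : ℤ}

lemma quasiMeasurePreserving_dil (hk : Icc ((2 : ℝ) ^ k) (2 ^ (k + 1)) ⊆ S) :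
    Measure.QuasiMeasurePreserving (dil k) unitMeasure (volume.restrict S) := by
  refine ⟨measurable_dil k, ?_⟩
  rw [map_dil]
  exact Measure.AbsolutelyContinuous.trans Measure.smul_absolutelyContinuous
    (Measure.absolutelyContinuous_of_le
      (Measure.restrict_mono (Ico_subset_Icc_self.trans hk) le_rfl))

lemma lintegral_dil (hk : Icc ((2 : ℝ) ^ k) (2 ^ (k + 1)) ⊆ S) (f : ℝ →ₘ[volume.restrict S] ℝ) :
    ∫⁻ t, ‖f (dil k t)‖ₑ ∂unitMeasure = ENNReal.ofReal ((2 : ℝ) ^ k)⁻¹ *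
      ∫⁻ x in Ico ((2 : ℝ) ^ k) (2 ^ (k + 1)), ‖f x‖ₑ ∂(volume.restrict S) := by
  have hf : AEMeasurable (fun x => ‖f x‖ₑ) (unitMeasure.map (dil k)) :=
    f.aestronglyMeasurable.enorm.mono_ac (quasiMeasurePreserving_dil hk).absolutelyContinuous
  rw [← lintegral_map' hf (measurable_dil k).aemeasurable, map_dil, lintegral_smul_measure,
    Measure.restrict_restrict measurableSet_Ico, smul_eq_mul,
    inter_eq_left.2 (Ico_subset_Icc_self.trans hk)]

lemma lintegral_dil_le (hk : Icc ((2 : ℝ) ^ k) (2 ^ (k + 1)) ⊆ S)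
    (f : ℝ →ₘ[volume.restrict S] ℝ) :
    ∫⁻ t, ‖f (dil k t)‖ₑ ∂unitMeasure ≤ 2 * cesFunNorm S f := by
  have hp : (0 : ℝ) < 2 ^ k := by positivity
  have hp1 : (0 : ℝ) < 2 ^ (k + 1) := by positivity
  have hle : (2 : ℝ) ^ k ≤ 2 ^ (k + 1) := zpow_le_zpow_right₀ (by norm_num) (by omega)
  have h : (∫⁻ t in Ioc 0 ((2 : ℝ) ^ (k + 1)), ENNReal.ofReal |f t| ∂(volume.restrict S)) /
      ENNReal.ofReal ((2 : ℝ) ^ (k + 1)) ≤ cesFunNorm S f :=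
    le_iSup (fun x : {x : ℝ // x ∈ S ∧ 0 < x} =>
      (∫⁻ t in Set.Ioc 0 (x : ℝ), ENNReal.ofReal |f t| ∂(volume.restrict S)) /
        ENNReal.ofReal (x : ℝ)) ⟨2 ^ (k + 1), hk (right_mem_Icc.2 hle), hp1⟩
  rw [ENNReal.div_le_iff (by positivity) (by finiteness)] at h
  have hIco : ∫⁻ x in Ico ((2 : ℝ) ^ k) (2 ^ (k + 1)), ‖f x‖ₑ ∂(volume.restrict S) ≤
      cesFunNorm S f * ENNReal.ofReal ((2 : ℝ) ^ (k + 1)) := by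
    refine le_trans ?_ h
    simp only [← Real.enorm_eq_ofReal_abs]
    exact lintegral_mono_set fun x hx => ⟨hp.trans_le hx.1, hx.2.le⟩
  rw [lintegral_dil hk]
  calc _ ≤ ENNReal.ofReal ((2 : ℝ) ^ k)⁻¹ *
        (cesFunNorm S f * ENNReal.ofReal ((2 : ℝ) ^ (k + 1))) := by gcongr
    _ = cesFunNorm S f * ENNReal.ofReal (((2 : ℝ) ^ k)⁻¹ * (2 : ℝ) ^ (k + 1)) := by
        rw [ENNReal.ofReal_mul (by positivity)]; ring
    _ = 2 * cesFunNorm S f := by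
        rw [zpow_add_one₀ (by norm_num), inv_mul_cancel_left₀ hp.ne']
        simp [mul_comm]

end

lemma Ioc_subset_iUnion_dyadic {x : ℝ} :
    Ioc 0 x ⊆ ⋃ j : ℕ, Ico ((2 : ℝ) ^ (Int.log 2 x - j)) (2 ^ (Int.log 2 x - j + 1)) := by
  intro t ht
  have hlog : Int.log 2 t ≤ Int.log 2 x := Int.log_mono_right ht.1 ht.2
  refine mem_iUnion.2 ⟨(Int.log 2 x - Int.log 2 t).toNat, ?_⟩
  have e : Int.log 2 x - ((Int.log 2 x - Int.log 2 t).toNat : ℤ) = Int.log 2 t := by omega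
  rw [e]
  exact ⟨by exact_mod_cast Int.zpow_log_le_self (b := 2) (by norm_num) ht.1,
    by exact_mod_cast Int.lt_zpow_succ_log_self (b := 2) (by norm_num) t⟩

lemma cesFunNorm_le_of_blocks {S : Set ℝ} {c : ℕ → ℤ}
    (h1 : ∀ n, Icc ((2 : ℝ) ^ c n) (2 ^ (c n + 1)) ⊆ S)
    (h2 : ∀ k ∉ range c, volume (Ico ((2 : ℝ) ^ k) (2 ^ (k + 1)) ∩ S) = 0)
    (f : ℝ →ₘ[volume.restrict S] ℝ) {C : ℝ≥0∞}
    (hf : ∀ n, ∫⁻ t, ‖f (dil (c n) t)‖ₑ ∂unitMeasure ≤ C) : cesFunNorm S f ≤ 2 * C := by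
  have hk : ∀ k : ℤ, ∫⁻ x in Ico ((2 : ℝ) ^ k) (2 ^ (k + 1)), ‖f x‖ₑ ∂(volume.restrict S) ≤
      ENNReal.ofReal ((2 : ℝ) ^ k) * C := by
    intro k
    by_cases hkc : k ∈ range c
    · obtain ⟨n, rfl⟩ := hkc
      have hp : (0 : ℝ) < 2 ^ c n := by positivity
      have := hf n
      rw [lintegral_dil (h1 n)] at this
      calc _ = ENNReal.ofReal ((2 : ℝ) ^ c n) * (ENNReal.ofReal ((2 : ℝ) ^ c n)⁻¹ *
            ∫⁻ x in Ico ((2 : ℝ) ^ c n) (2 ^ (c n + 1)), ‖f x‖ₑ ∂(volume.restrict S)) := by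
            rw [← mul_assoc, ← ENNReal.ofReal_mul hp.le, mul_inv_cancel₀ hp.ne']
            simp
        _ ≤ _ := by gcongr
    · have : (volume.restrict S) (Ico ((2 : ℝ) ^ k) (2 ^ (k + 1))) = 0 := by
        rw [Measure.restrict_apply measurableSet_Ico]
        exact h2 k hkc
      rw [Measure.restrict_zero_set this]
      simp
  refine iSup_le ?_
  rintro ⟨x, hxS, hx⟩
  rw [ENNReal.div_le_iff (by positivity) (by finiteness)]
  simp only [← Real.enorm_eq_ofReal_abs]
  have hK : (2 : ℝ) ^ Int.log 2 x ≤ x := by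
    exact_mod_cast Int.zpow_log_le_self (b := 2) (by norm_num) hx
  calc ∫⁻ t in Ioc 0 x, ‖f t‖ₑ ∂(volume.restrict S)
      ≤ ∫⁻ t in ⋃ j : ℕ, Ico ((2 : ℝ) ^ (Int.log 2 x - j)) (2 ^ (Int.log 2 x - j + 1)),
          ‖f t‖ₑ ∂(volume.restrict S) := lintegral_mono_set Ioc_subset_iUnion_dyadic
    _ ≤ ∑' j : ℕ, ∫⁻ t in Ico ((2 : ℝ) ^ (Int.log 2 x - j)) (2 ^ (Int.log 2 x - j + 1)),
          ‖f t‖ₑ ∂(volume.restrict S) := lintegral_iUnion_le _ _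
    _ ≤ ∑' j : ℕ, ENNReal.ofReal ((2 : ℝ) ^ Int.log 2 x) * C * 2⁻¹ ^ j := by
        refine ENNReal.tsum_le_tsum fun j => (hk _).trans (le_of_eq ?_)
        have : (2⁻¹ : ℝ≥0∞) ^ j = ENNReal.ofReal ((2 : ℝ)⁻¹ ^ j) := by
          rw [ENNReal.ofReal_pow (by norm_num), ENNReal.ofReal_inv_of_pos (by norm_num)]
          simp
        rw [this, mul_right_comm, ← ENNReal.ofReal_mul (by positivity), zpow_sub₀ (by norm_num),
          inv_pow, zpow_natCast, div_eq_mul_inv]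
    _ = 2 * C * ENNReal.ofReal ((2 : ℝ) ^ Int.log 2 x) := by
        rw [ENNReal.tsum_mul_left, ENNReal.tsum_geometric, ENNReal.one_sub_inv_two, inv_inv]
        ring
    _ ≤ 2 * C * ENNReal.ofReal x := by gcongr

/-- The function obtained by gluing given functions on `[0,1)` along the dyadic blocks. -/
def glue (u : ℤ → ℝ → ℝ) (x : ℝ) : ℝ :=
  u ⌊Real.logb 2 x⌋ (x / 2 ^ ⌊Real.logb 2 x⌋ - 1)

lemma measurable_glue {u : ℤ → ℝ → ℝ} (hu : ∀ k, Measurable (u k)) : Measurable (glue u) := by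
  have h : Measurable (fun p : ℤ × ℝ => u p.1 (p.2 / 2 ^ p.1 - 1)) :=
    measurable_from_prod_countable_right fun k =>
      (hu k).comp (by fun_prop : Measurable fun y : ℝ => y / (2 : ℝ) ^ k - 1)
  have hl : Measurable (fun x : ℝ => ⌊Real.logb 2 x⌋) :=
    Int.measurable_floor.comp (Real.measurable_log.div_const _)
  exact h.comp (hl.prodMk measurable_id)

lemma glue_dil (u : ℤ → ℝ → ℝ) (k : ℤ) {t : ℝ} (ht : t ∈ Ico (0 : ℝ) 1) :
    glue u (dil k t) = u k t := by
  have hp : (0 : ℝ) < 2 ^ k := by positivity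
  have hd := (dil_mem_iff k t).2 ht
  have hpos : 0 < dil k t := hp.trans_le hd.1
  have e : ⌊Real.logb 2 (dil k t)⌋ = k := by
    rw [Int.floor_eq_iff, Real.le_logb_iff_rpow_le (by norm_num) hpos,
      Real.logb_lt_iff_lt_rpow (by norm_num) hpos, Real.rpow_intCast]
    refine ⟨hd.1, ?_⟩
    have := hd.2
    rw [← Real.rpow_intCast] at this
    exact_mod_cast this
  rw [glue, e]
  congr 1
  rw [dil]
  field_simp
  ring

/-- If `I = S` consists, up to a null set, of dyadic blocks enumerated by `c`, then `Ces_∞(I)` is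
isomorphic to `ℓ_∞(L_1[0,1))`. -/
lemma nonempty_equiv_of_repFun {S : Set ℝ} {c : ℕ → ℤ} (hc : Function.Injective c)
    (h1 : ∀ n, Icc ((2 : ℝ) ^ c n) (2 ^ (c n + 1)) ⊆ S)
    (h2 : ∀ k ∉ range c, volume (Ico ((2 : ℝ) ^ k) (2 ^ (k + 1)) ∩ S) = 0)
    (E : Type*) [NormedAddCommGroup E] [NormedSpace ℝ E] [CompleteSpace E]
    (hE : RepFun S (cesFunNorm S) E) : Nonempty (E ≃L[ℝ] (ℕ →ᵇ UnitL1)) := by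
  obtain ⟨J, hJ, hrange, hnorm⟩ := hE
  have hfin : ∀ e, cesFunNorm S (J e) ≠ ⊤ := fun e => by
    have : J e ∈ {x | cesFunNorm S x ≠ ⊤} := hrange ▸ mem_range_self e
    exact this
  have hq := fun n => quasiMeasurePreserving_dil (h1 n)
  have hJ_int : ∀ e n, Integrable (fun t => J e (dil (c n) t)) unitMeasure := fun e n =>
    ⟨(J e).aestronglyMeasurable.comp_quasiMeasurePreserving (hq n),
      (lintegral_dil_le (h1 n) (J e)).trans_lt (by have := hfin e; finiteness)⟩
  have hnT : ∀ e n, ‖(hJ_int e n).toL1‖ ≤ 2 * ‖e‖ := fun e n => by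
    rw [← toReal_enorm, Integrable.enorm_toL1, hnorm]
    have := ENNReal.toReal_mono (by have := hfin e; finiteness) (lintegral_dil_le (h1 n) (J e))
    simpa using this
  let L : ℕ → E →L[ℝ] UnitL1 := fun n => LinearMap.mkContinuous
    { toFun := fun e => (hJ_int e n).toL1
      map_add' := fun e e' => by
        rw [← Integrable.toL1_add, Integrable.toL1_eq_toL1_iff, map_add]
        exact (hq n).ae (AEEqFun.coeFn_add (J e) (J e'))
      map_smul' := fun a e => by
        rw [RingHom.id_apply, ← Integrable.toL1_smul, Integrable.toL1_eq_toL1_iff, map_smul]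
        exact (hq n).ae (AEEqFun.coeFn_smul a (J e)) } 2 (fun e => hnT e n)
  let T : E →L[ℝ] (ℕ →ᵇ UnitL1) := boundedFamily L 2 (fun n e => hnT e n)
  have hT : ∀ e n, T e n = (hJ_int e n).toL1 := fun e n => rfl
  refine ⟨ContinuousLinearEquiv.ofBijective T ?_ ?_⟩
  · refine LinearMap.ker_eq_bot'.2 fun e he => ?_
    have h0 : ∀ n, ∫⁻ t, ‖J e (dil (c n) t)‖ₑ ∂unitMeasure ≤ 0 := fun n => by
      have h3 : (hJ_int e n).toL1 = 0 := by
        rw [← hT]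
        exact congrArg (fun g : ℕ →ᵇ UnitL1 => g n) he
      rw [← Integrable.enorm_toL1 (hJ_int e n), h3, enorm_zero]
    have h3 := cesFunNorm_le_of_blocks h1 h2 (J e) h0
    rw [mul_zero, nonpos_iff_eq_zero] at h3
    rw [← norm_eq_zero, hnorm, h3, ENNReal.toReal_zero]
  · refine LinearMap.range_eq_top.2 fun g => ?_
    let u : ℤ → ℝ → ℝ := fun k => g (Function.invFun c k)
    have hu : ∀ n, u (c n) = g n := fun n => by
      simp only [u, Function.leftInverse_invFun hc n]
    have hum : Measurable (glue u) := measurable_glue fun k =>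
      (Lp.stronglyMeasurable _).measurable
    let f : ℝ →ₘ[volume.restrict S] ℝ := AEEqFun.mk (glue u) hum.aestronglyMeasurable
    have hfg : ∀ n, (fun t => f (dil (c n) t)) =ᵐ[unitMeasure] g n := fun n => by
      filter_upwards [(hq n).ae (AEEqFun.coeFn_mk (glue u) hum.aestronglyMeasurable),
        ae_restrict_mem measurableSet_Ico] with t ht hmem
      rw [ht, glue_dil u (c n) hmem, hu]
    have hN : cesFunNorm S f ≤ 2 * ENNReal.ofReal ‖g‖ := by
      refine cesFunNorm_le_of_blocks h1 h2 f fun n => ?_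
      rw [lintegral_congr_ae ((hfg n).mono fun t ht => congrArg (‖·‖ₑ) ht),
        ← ofReal_integral_norm_eq_lintegral_enorm (L1.integrable_coeFn _),
        ← L1.norm_eq_integral_norm]
      exact ENNReal.ofReal_le_ofReal (norm_apply_le n g)
    obtain ⟨e, he⟩ : f ∈ range J := by
      rw [hrange]
      exact ne_top_of_le_ne_top (by finiteness) hN
    refine ⟨e, ?_⟩
    ext1 n
    refine Lp.ext ?_
    change (hJ_int e n).toL1 =ᵐ[unitMeasure] g n
    refine (Integrable.coeFn_toL1 _).trans ?_
    rw [he]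
    exact hfg n

/-! ### The isomorphism theorem -/

/-- For `I = [0,1]` and for `I = [0,∞)`, the Cesàro function space
`Ces_∞(I)` is isomorphic as a Banach space to the Cesàro sequence space `ces_∞`, i.e.
there is a continuous linear equivalence (a bounded linear bijection with bounded inverse)
between them. -/
theorem cesInfty_function_isomorphic_to_cesInfty_sequence :
    ∀ (E₁ E₂ F : Type*)
      [NormedAddCommGroup E₁] [NormedSpace ℝ E₁] [CompleteSpace E₁]
      [NormedAddCommGroup E₂] [NormedSpace ℝ E₂] [CompleteSpace E₂]
      [NormedAddCommGroup F] [NormedSpace ℝ F] [CompleteSpace F],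
      RepFun (Set.Icc 0 1) (cesFunNorm (Set.Icc 0 1)) E₁ →
      RepFun (Set.Ici 0) (cesFunNorm (Set.Ici 0)) E₂ →
      RepSeq cesNorm F →
      Nonempty (E₁ ≃L[ℝ] F) ∧ Nonempty (E₂ ≃L[ℝ] F) := by
  intro E₁ E₂ F _ _ _ _ _ _ _ _ _ hE₁ hE₂ hF
  obtain ⟨eF⟩ := nonempty_equiv_of_repSeq F hF
  have h₁ : Nonempty (E₁ ≃L[ℝ] (ℕ →ᵇ UnitL1)) := by
    -- `[0,1]` is made of the blocks `[2^k, 2^{k+1})` with `k < 0`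
    refine nonempty_equiv_of_repFun (c := fun n => -(n : ℤ) - 1) (fun m n h => ?_) (fun n => ?_)
      (fun k hk => ?_) E₁ hE₁
    · simpa using h
    · refine Icc_subset_Icc (by positivity) (zpow_le_one_of_nonpos₀ (by norm_num) (by omega))
    · have hk0 : 0 ≤ k := by
        by_contra hneg
        exact hk ⟨(-k - 1).toNat, by simp only; omega⟩
      have h1k : (1 : ℝ) ≤ 2 ^ k := one_le_zpow₀ (by norm_num) hk0
      refine measure_mono_null (t := {1}) ?_ (by simp)
      rintro x ⟨hx, hx'⟩
      exact le_antisymm hx'.2 (h1k.trans hx.1)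
  have h₂ : Nonempty (E₂ ≃L[ℝ] (ℕ →ᵇ UnitL1)) := by
    refine nonempty_equiv_of_repFun (c := (Denumerable.eqv ℤ).symm) (Equiv.injective _)
      (fun n => ?_) (fun k hk => ?_) E₂ hE₂
    · exact fun x hx => le_trans (by positivity) hx.1
    · exact absurd (Equiv.surjective _ k) hk
  obtain ⟨e₁⟩ := h₁
  obtain ⟨e₂⟩ := h₂
  exact ⟨⟨e₁.trans eF⟩, ⟨e₂.trans eF⟩⟩

end
end

section
/- For every n ∈ ℕ and all nonnegative reals c_0, c_1, …, c_n, the sequence y defined by y_{2^i} = 2^{-i} c_i for 0 ≤ i ≤ n and y_k = 0 for all other indices k satisfies (1/36) ∑_{i=0}^n c_i ≤ ‖y‖_{l̃_1} ≤ ∑_{i=0}^n c_i. Consequently, the basic sequence {2^{-i} e_{2^i}}_{i≥0} is equivalent in l̃_1 to the canonical basis of l_1. -/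
/-! Both estimates hold for arbitrary real coefficients `a`, with constants `1/2` and `1`. Write
`s n = sup_{k ≥ n} |y k|`. Since `y` is supported on the (0-based) indices `2^i - 1`, for the upper
bound `s n` is at most the sum of `2^{-i} |a i|` over those `i` with `n < 2^i`; summing over `n`
counts the `i`-th term exactly `2^i` times. For the lower bound, each of the `2^i` values `s n` with
`n` in the dyadic block `[2^i, 2^(i+1))` is at least `2^{-(i+1)} |a (i+1)|`, so this block
contributes at least `|a (i+1)| / 2`. -/

open MeasureTheory Filter Topology ENNReal Set

noncomputable section

/-- The Tandori `l̃₁` norm of a real sequence (0-based indexing: `x k` is the `(k+1)`-st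
term): `∑_{n=1}^∞ sup_{k ≥ n} |x_k|`. -/
def tandoriNorm (x : ℕ → ℝ) : ℝ≥0∞ :=
  ∑' n : ℕ, ⨆ k : ℕ, ⨆ _ : n ≤ k, ENNReal.ofReal |x k|

/-- Lower estimate with constant `1/2`: the dyadic blocks `[2^i, 2^(i+1))` are disjoint and each
contributes at least half of the next coefficient. -/
lemma half_sum_le_tandoriNorm (m : ℕ) (a y : ℕ → ℝ)
    (hy : ∀ i ≤ m, y (2 ^ i - 1) = (1 / 2 : ℝ) ^ i * a i) :
    ENNReal.ofReal ((1 / 2) * ∑ i ∈ Finset.range (m + 1), |a i|) ≤ tandoriNorm y := by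
  set s : ℕ → ℝ≥0∞ := fun n => ⨆ k : ℕ, ⨆ _ : n ≤ k, ENNReal.ofReal |y k| with hs
  have hle : ∀ n k : ℕ, n ≤ k → ENNReal.ofReal |y k| ≤ s n := fun n k h =>
    le_iSup₂ (f := fun (k : ℕ) (_ : n ≤ k) => ENNReal.ofReal |y k|) k h
  have key : ∀ j ≤ m, ENNReal.ofReal ((1 / 2) * ∑ i ∈ Finset.range (j + 1), |a i|) ≤
      ∑ n ∈ Finset.range (2 ^ j), s n := by
    intro j
    induction j with
    | zero =>
      intro _
      have h0 := hy 0 (Nat.zero_le _)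
      have h1 := hle 0 0 le_rfl
      simp only [pow_zero, Nat.sub_self, one_mul] at h0
      rw [h0] at h1
      simp only [zero_add, Finset.sum_range_one, pow_zero]
      refine le_trans (ENNReal.ofReal_le_ofReal ?_) h1
      linarith [abs_nonneg (a 0)]
    | succ j ih =>
      intro hj
      have hblock : ENNReal.ofReal ((1 / 2) * |a (j + 1)|) ≤
          ∑ n ∈ Finset.Ico (2 ^ j) (2 ^ (j + 1)), s n := by
        have hcard : (Finset.Ico (2 ^ j) (2 ^ (j + 1))).card = 2 ^ j := by
          rw [Nat.card_Ico, pow_succ]; omega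
        calc ENNReal.ofReal ((1 / 2) * |a (j + 1)|)
            = (2 ^ j : ℕ) • ENNReal.ofReal |y (2 ^ (j + 1) - 1)| := by
              rw [← ENNReal.ofReal_nsmul, hy _ hj, abs_mul,
                abs_of_pos (a := (1 / 2 : ℝ) ^ (j + 1)) (by positivity)]
              congr 1
              rw [nsmul_eq_mul]
              push_cast
              rw [pow_succ, ← mul_assoc, ← mul_assoc, ← mul_pow]
              norm_num
          _ ≤ _ := by
              refine (congrArg (· • _) hcard.symm).trans_le
                (Finset.card_nsmul_le_sum _ _ _ fun n hn => hle n _ ?_)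
              have := (Finset.mem_Ico.mp hn).2
              omega
      rw [Finset.sum_range_succ, mul_add, ENNReal.ofReal_add (by positivity) (by positivity),
        ← Finset.sum_range_add_sum_Ico s (Nat.pow_le_pow_right two_pos (Nat.le_succ j))]
      exact add_le_add (ih (by omega)) hblock
  exact (key m le_rfl).trans (ENNReal.sum_le_tsum _)

/-- Upper estimate with constant `1`: the term `2^{-i} |a i|` affects only the `2^i` suprema over
`k ≥ n` with `n < 2^i`. -/
lemma tandoriNorm_le_sum (m : ℕ) (a y : ℕ → ℝ)
    (hy : ∀ i ≤ m, y (2 ^ i - 1) = (1 / 2 : ℝ) ^ i * a i)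
    (hz : ∀ k : ℕ, (∀ i ≤ m, k + 1 ≠ 2 ^ i) → y k = 0) :
    tandoriNorm y ≤ ENNReal.ofReal (∑ i ∈ Finset.range (m + 1), |a i|) := by
  set t : ℕ → ℕ → ℝ≥0∞ := fun i n =>
    if n < 2 ^ i then ENNReal.ofReal |y (2 ^ i - 1)| else 0 with ht
  have hsum : ∀ i ≤ m, ∑' n, t i n = ENNReal.ofReal |a i| := by
    intro i hi
    rw [tsum_eq_sum (s := Finset.range (2 ^ i)) (fun n hn => if_neg (by simpa using hn)),
      Finset.sum_congr rfl (fun n hn => if_pos (Finset.mem_range.mp hn)), Finset.sum_const,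
      Finset.card_range, ← ENNReal.ofReal_nsmul, hy i hi, abs_mul,
      abs_of_pos (a := (1 / 2 : ℝ) ^ i) (by positivity)]
    congr 1
    rw [nsmul_eq_mul]
    push_cast
    rw [← mul_assoc, ← mul_pow]
    norm_num
  have hsup : ∀ n, (⨆ k : ℕ, ⨆ _ : n ≤ k, ENNReal.ofReal |y k|) ≤
      ∑ i ∈ Finset.range (m + 1), t i n := by
    intro n
    refine iSup₂_le fun k hk => ?_
    by_cases h : ∀ i ≤ m, k + 1 ≠ 2 ^ i
    · simp [hz k h]
    · push Not at h
      obtain ⟨i, hi, hki⟩ := h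
      have hk' : k = 2 ^ i - 1 := by omega
      calc ENNReal.ofReal |y k| = t i n := by
            rw [hk']; exact (if_pos (by omega)).symm
        _ ≤ _ := Finset.single_le_sum (f := fun i => t i n) (fun _ _ => zero_le)
              (Finset.mem_range.mpr (by omega))
  calc tandoriNorm y ≤ ∑' n, ∑ i ∈ Finset.range (m + 1), t i n := ENNReal.tsum_le_tsum hsup
    _ = ∑ i ∈ Finset.range (m + 1), ∑' n, t i n :=
        Summable.tsum_finsetSum fun _ _ => ENNReal.summable
    _ = ∑ i ∈ Finset.range (m + 1), ENNReal.ofReal |a i| :=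
        Finset.sum_congr rfl fun i hi => hsum i (by have := Finset.mem_range.mp hi; omega)
    _ = _ := (ENNReal.ofReal_sum_of_nonneg fun _ _ => abs_nonneg _).symm

/-- For every `n` and nonnegative reals `c_0, …, c_n`, the sequence `y`
with `y_{2^i} = 2^{-i} c_i` for `0 ≤ i ≤ n` and `y_k = 0` otherwise (in our 0-based
indexing, `y (2^i - 1)` is the entry of index `2^i`) satisfies
`(1/36) ∑_{i=0}^n c_i ≤ ‖y‖_{l̃₁} ≤ ∑_{i=0}^n c_i`.  Consequently (second conjunct), the
sequence `{2^{-i} e_{2^i}}_{i ≥ 0}` is equivalent in `l̃₁` to the canonical basis of `l₁`: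
there are constants `c, C > 0` such that every finite linear combination
`y = ∑_{i=0}^m a_i 2^{-i} e_{2^i}` satisfies
`c ∑ |a_i| ≤ ‖y‖_{l̃₁} ≤ C ∑ |a_i|`. -/
theorem tandori_l1_power_basis_equivalent_l1_basis :
    (∀ (n : ℕ) (c : ℕ → ℝ), (∀ i, 0 ≤ c i) →
      ∀ y : ℕ → ℝ,
        (∀ i ≤ n, y (2 ^ i - 1) = (1 / 2 : ℝ) ^ i * c i) →
        (∀ k : ℕ, (∀ i ≤ n, k + 1 ≠ 2 ^ i) → y k = 0) →
        ENNReal.ofReal ((1 / 36) * ∑ i ∈ Finset.range (n + 1), c i) ≤ tandoriNorm y ∧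
        tandoriNorm y ≤ ENNReal.ofReal (∑ i ∈ Finset.range (n + 1), c i)) ∧
    (∃ c > (0 : ℝ), ∃ C > (0 : ℝ),
      ∀ (m : ℕ) (a : ℕ → ℝ) (y : ℕ → ℝ),
        (∀ i ≤ m, y (2 ^ i - 1) = (1 / 2 : ℝ) ^ i * a i) →
        (∀ k : ℕ, (∀ i ≤ m, k + 1 ≠ 2 ^ i) → y k = 0) →
        ENNReal.ofReal (c * ∑ i ∈ Finset.range (m + 1), |a i|) ≤ tandoriNorm y ∧
        tandoriNorm y ≤ ENNReal.ofReal (C * ∑ i ∈ Finset.range (m + 1), |a i|)) := by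
  refine ⟨fun n c hc y hy hz => ?_, 1 / 2, by norm_num, 1, one_pos, fun m a y hy hz =>
    ⟨half_sum_le_tandoriNorm m a y hy, by simpa using tandoriNorm_le_sum m a y hy hz⟩⟩
  have habs : ∑ i ∈ Finset.range (n + 1), |c i| = ∑ i ∈ Finset.range (n + 1), c i :=
    Finset.sum_congr rfl fun i _ => abs_of_nonneg (hc i)
  have hlow := half_sum_le_tandoriNorm n c y hy
  have hup := tandoriNorm_le_sum n c y hy hz
  rw [habs] at hlow hup
  have hnn : 0 ≤ ∑ i ∈ Finset.range (n + 1), c i := Finset.sum_nonneg fun i _ => hc i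
  exact ⟨(ENNReal.ofReal_le_ofReal (by linarith)).trans hlow, hup⟩

end
end

section
/- There exists a constant C ≥ 1 such that for every bounded real sequence (c_i)_{i≥0}, the sequence y defined by y_{2^i} = 2^i c_i for i ≥ 0 and y_k = 0 for all indices k that are not powers of 2 belongs to ces_∞ and satisfies sup_{i≥0} |c_i| ≤ ‖y‖_{ces_∞} ≤ C sup_{i≥0} |c_i|. In particular, the basic sequence {2^i e_{2^i}}_{i≥0} is equivalent in ces_∞ to the canonical basis of c_0, and l_∞ embeds isomorphically into ces_∞. -/
/-!
With 1-based indexing, `y` is supported on the powers of `2` and `|y_{2^i}| = 2^i |c_i|`.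

* Lower bound (`le_cesNorm_powers`): the Cesàro mean at `n = 2^i` is at least
  `|y_{2^i}| / 2^i = |c_i|`.
* Upper bound (`cesNorm_powers_le`): if `2^m ≤ n < 2^(m+1)`, only the entries `y_{2^i}` with
  `i ≤ m` contribute to the mean at `n`, so the partial sum is at most
  `(1 + 2 + ⋯ + 2^m) sup |c_i| ≤ 2n sup |c_i|`. Hence `C = 2` works.

For the embedding, `c ↦ y` is linear (`powerSeq`); composed with the inverse of the representing
map `J` it gives a linear map `l_∞ → E`, which by the two bounds satisfies
`‖x‖ ≤ ‖T x‖ ≤ 2 ‖x‖`.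
-/

open MeasureTheory Filter Topology ENNReal Set

noncomputable section

theorem le_cesNorm_powers {c y : ℕ → ℝ} (hy : ∀ i : ℕ, y (2 ^ i - 1) = (2 : ℝ) ^ i * c i) :
    (⨆ i : ℕ, ENNReal.ofReal |c i|) ≤ cesNorm y := by
  refine iSup_le fun i => ?_
  refine le_trans ?_ (le_iSup _ (2 ^ i - 1))
  have hpos : 1 ≤ 2 ^ i := Nat.one_le_two_pow
  have hcast : (((2 ^ i - 1 : ℕ) : ℝ≥0∞) + 1) = 2 ^ i := by
    have h : 2 ^ i - 1 + 1 = 2 ^ i := by omega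
    exact_mod_cast h
  rw [hcast, ENNReal.le_div_iff_mul_le (by simp) (by simp)]
  have hterm : ENNReal.ofReal |c i| * 2 ^ i = ENNReal.ofReal |y (2 ^ i - 1)| := by
    rw [hy, abs_mul, abs_of_pos (by positivity : (0 : ℝ) < 2 ^ i),
      ENNReal.ofReal_mul (by positivity), ENNReal.ofReal_pow (by norm_num), mul_comm]
    simp
  rw [hterm]
  exact Finset.single_le_sum (f := fun k => ENNReal.ofReal |y k|) (fun _ _ => zero_le)
    (Finset.mem_range.2 (Nat.lt_succ_self _))

theorem cesNorm_powers_le {c y : ℕ → ℝ} (hy : ∀ i : ℕ, y (2 ^ i - 1) = (2 : ℝ) ^ i * c i)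
    (hy0 : ∀ k : ℕ, (∀ i : ℕ, k + 1 ≠ 2 ^ i) → y k = 0) :
    cesNorm y ≤ ENNReal.ofReal 2 * ⨆ i : ℕ, ENNReal.ofReal |c i| := by
  set M := ⨆ i : ℕ, ENNReal.ofReal |c i| with hM
  refine iSup_le fun n => ?_
  have hcast : ((n : ℝ≥0∞) + 1) = ((n + 1 : ℕ) : ℝ≥0∞) := by push_cast; rfl
  rw [hcast]
  refine ENNReal.div_le_of_le_mul ?_
  set m := Nat.log 2 (n + 1) with hm
  have hlow : 2 ^ m ≤ n + 1 := Nat.pow_log_le_self 2 (by omega)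
  have hhigh : n + 1 < 2 ^ (m + 1) := Nat.lt_pow_succ_log_self (by norm_num) _
  have hgeom : ∑ i ∈ Finset.range (m + 1), 2 ^ i ≤ 2 * (n + 1) := by
    have h : ∑ i ∈ Finset.range (m + 1), 2 ^ i < 2 ^ (m + 1) :=
      Nat.geomSum_lt le_rfl (by simp)
    rw [pow_succ] at h
    omega
  calc ∑ k ∈ Finset.range (n + 1), ENNReal.ofReal |y k|
      ≤ ∑ k ∈ (Finset.range (m + 1)).image (fun i => 2 ^ i - 1), ENNReal.ofReal |y k| := by
        refine Finset.sum_le_sum_of_ne_zero fun k hk hne => ?_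
        have hyk : y k ≠ 0 := fun h => hne (by simp [h])
        obtain ⟨i, hi⟩ : ∃ i : ℕ, k + 1 = 2 ^ i := by
          by_contra! h
          exact hyk (hy0 k h)
        rw [Finset.mem_range] at hk
        refine Finset.mem_image.2 ⟨i, Finset.mem_range.2 ?_, by omega⟩
        exact (Nat.pow_lt_pow_iff_right (by norm_num : 1 < 2)).1 (by omega)
    _ = ∑ i ∈ Finset.range (m + 1), ENNReal.ofReal |y (2 ^ i - 1)| := by
        refine Finset.sum_image fun i _ j _ hij => ?_
        have h1 : 1 ≤ 2 ^ i := Nat.one_le_two_pow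
        have h2 : 1 ≤ 2 ^ j := Nat.one_le_two_pow
        have hij' : 2 ^ i - 1 = 2 ^ j - 1 := hij
        exact Nat.pow_right_injective le_rfl (show 2 ^ i = 2 ^ j by omega)
    _ ≤ ∑ i ∈ Finset.range (m + 1), (2 : ℝ≥0∞) ^ i * M := by
        refine Finset.sum_le_sum fun i _ => ?_
        rw [hy, abs_mul, abs_of_pos (by positivity : (0 : ℝ) < 2 ^ i),
          ENNReal.ofReal_mul (by positivity), ENNReal.ofReal_pow (by norm_num)]
        simp only [ENNReal.ofReal_ofNat]
        gcongr
        exact le_iSup (fun i => ENNReal.ofReal |c i|) i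
    _ = ((∑ i ∈ Finset.range (m + 1), 2 ^ i : ℕ) : ℝ≥0∞) * M := by
        rw [← Finset.sum_mul]; push_cast; rfl
    _ ≤ ((2 * (n + 1) : ℕ) : ℝ≥0∞) * M := by gcongr
    _ = ENNReal.ofReal 2 * M * ((n + 1 : ℕ) : ℝ≥0∞) := by
        simp only [ENNReal.ofReal_ofNat]; push_cast; ring

/-- The sequence `∑ i, c i • 2^i e_{2^i}`, in 0-based indexing: its value at `2^i - 1` is
`2^i * c i`, and it vanishes at every other index. -/
def powerSeq (c : ℕ → ℝ) (k : ℕ) : ℝ :=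
  if k + 1 = 2 ^ Nat.log 2 (k + 1) then 2 ^ Nat.log 2 (k + 1) * c (Nat.log 2 (k + 1)) else 0

theorem powerSeq_pow (c : ℕ → ℝ) (i : ℕ) : powerSeq c (2 ^ i - 1) = (2 : ℝ) ^ i * c i := by
  have h : 2 ^ i - 1 + 1 = 2 ^ i := Nat.sub_add_cancel Nat.one_le_two_pow
  simp [powerSeq, h, Nat.log_pow]

theorem powerSeq_eq_zero (c : ℕ → ℝ) (k : ℕ) (hk : ∀ i : ℕ, k + 1 ≠ 2 ^ i) :
    powerSeq c k = 0 :=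
  if_neg (hk _)

theorem powerSeq_add (a b : ℕ → ℝ) : powerSeq (a + b) = powerSeq a + powerSeq b := by
  funext k
  simp only [powerSeq, Pi.add_apply]
  split_ifs <;> ring

theorem powerSeq_smul (r : ℝ) (a : ℕ → ℝ) : powerSeq (r • a) = r • powerSeq a := by
  funext k
  simp only [powerSeq, Pi.smul_apply, smul_eq_mul]
  split_ifs <;> ring

theorem cesNorm_powerSeq_le (x : lp (fun _ : ℕ => ℝ) ⊤) :
    cesNorm (powerSeq x) ≤ ENNReal.ofReal (2 * ‖x‖) := by
  refine (cesNorm_powers_le (powerSeq_pow x) (powerSeq_eq_zero x)).trans ?_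
  rw [ENNReal.ofReal_mul (by norm_num)]
  gcongr
  exact iSup_le fun i => ENNReal.ofReal_le_ofReal (lp.norm_apply_le_norm (by simp) x i)

/-- There is a constant `C ≥ 1` such that for every bounded real
sequence `(c_i)`, the sequence `y` with `y_{2^i} = 2^i c_i` and `y_k = 0` for `k` not a
power of `2` (0-based indexing: `y (2^i - 1)` is the entry of index `2^i`) belongs to
`ces_∞` and `sup_i |c_i| ≤ ‖y‖_{ces_∞} ≤ C sup_i |c_i|`.  In particular (second
conjunct), `l_∞` embeds isomorphically into `ces_∞`: for any Banach space `E`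
representing `ces_∞` there is a bounded linear injection `T : l_∞ → E` bounded below. -/
theorem ces_infty_power_basis_c0_and_linfty_embeds :
    (∃ C : ℝ, 1 ≤ C ∧
      ∀ c : ℕ → ℝ, BddAbove (Set.range fun i => |c i|) →
        ∀ y : ℕ → ℝ,
          (∀ i : ℕ, y (2 ^ i - 1) = (2 : ℝ) ^ i * c i) →
          (∀ k : ℕ, (∀ i : ℕ, k + 1 ≠ 2 ^ i) → y k = 0) →
          cesNorm y ≠ ⊤ ∧
          (⨆ i : ℕ, ENNReal.ofReal |c i|) ≤ cesNorm y ∧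
          cesNorm y ≤ ENNReal.ofReal C * ⨆ i : ℕ, ENNReal.ofReal |c i|) ∧
    (∀ (E : Type*) [NormedAddCommGroup E] [NormedSpace ℝ E] [CompleteSpace E],
      RepSeq cesNorm E →
      ∃ T : lp (fun _ : ℕ => ℝ) ⊤ →L[ℝ] E, ∃ c > (0 : ℝ),
        ∀ x : lp (fun _ : ℕ => ℝ) ⊤, c * ‖x‖ ≤ ‖T x‖) := by
  refine ⟨⟨2, by norm_num, fun c hc y hy hy0 => ?_⟩, ?_⟩
  · refine ⟨?_, le_cesNorm_powers hy, cesNorm_powers_le hy hy0⟩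
    obtain ⟨B, hB⟩ := hc
    have hsup : (⨆ i : ℕ, ENNReal.ofReal |c i|) ≤ ENNReal.ofReal B :=
      iSup_le fun i => ENNReal.ofReal_le_ofReal (hB ⟨i, rfl⟩)
    exact ne_top_of_le_ne_top
      (ENNReal.mul_ne_top ENNReal.ofReal_ne_top (ne_top_of_le_ne_top ENNReal.ofReal_ne_top hsup))
      (cesNorm_powers_le hy hy0)
  · rintro E _ _ _ ⟨J, hJ, hrange, hnorm⟩
    have hfin : ∀ x : lp (fun _ : ℕ => ℝ) ⊤, cesNorm (powerSeq x) ≠ ⊤ := fun x =>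
      ne_top_of_le_ne_top ENNReal.ofReal_ne_top (cesNorm_powerSeq_le x)
    have hex : ∀ x : lp (fun _ : ℕ => ℝ) ⊤, ∃ e : E, J e = powerSeq x := fun x => by
      have hx : powerSeq x ∈ Set.range J := by
        rw [hrange]
        exact hfin x
      exact hx
    choose S hS using hex
    let L : lp (fun _ : ℕ => ℝ) ⊤ →ₗ[ℝ] E :=
      { toFun := S
        map_add' := fun a b => hJ (by
          rw [map_add, hS, hS, hS, lp.coeFn_add, powerSeq_add])
        map_smul' := fun r a => hJ (by
          rw [RingHom.id_apply, map_smul, hS, hS, lp.coeFn_smul, powerSeq_smul]) }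
    refine ⟨L.mkContinuous 2 fun x => ?_, 1, one_pos, fun x => ?_⟩
    · change ‖S x‖ ≤ 2 * ‖x‖
      rw [hnorm, hS]
      exact ENNReal.toReal_le_of_le_ofReal (by positivity) (cesNorm_powerSeq_le x)
    · change 1 * ‖x‖ ≤ ‖S x‖
      rw [one_mul]
      refine lp.norm_le_of_forall_le (norm_nonneg _) fun i => ?_
      rw [hnorm, hS]
      refine (ENNReal.ofReal_le_iff_le_toReal (hfin x)).1 ?_
      exact (le_iSup (fun i => ENNReal.ofReal |x i|) i).trans
        (le_cesNorm_powers (powerSeq_pow x))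

end
end

section
/- The Cesàro sequence space ces_∞ is not isomorphic to l_∞: there is no bounded linear bijection from ces_∞ onto l_∞ with bounded inverse. -/
/-!
The space `ces_∞` contains, on the block of coordinates `n, …, 2n - 1`, a copy of `ℓ_1^n` that is
complemented with constants independent of `n`. An isomorphism `T : ces_∞ ≃ ℓ_∞` would therefore
produce vectors `a_i = T u_i` in `ℓ_∞` and functionals `b_i` on `ℓ_∞` (`i < n`) with
`b_i(a_i) = 1`, `‖a_i‖ ≤ K` and `∑_i |b_i(y)| ≤ M ‖y‖`, where `K` and `M` do not depend on `n`.

This is impossible for large `n` by a Riesz product argument (`sum_apply_le`). Put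
`d_i = a_i / (K √n)` and, for a choice of signs `ε`, let `y_ε = Im ∏_k (1 + i ε_k d_k)`, computed
coordinatewise in `ℓ_∞`. Then `‖y_ε‖ ≤ e^{1/2} ≤ 2`, because `∑_k d_k² ≤ 1` in each coordinate,
while averaging over `ε` gives `𝔼 ε_i y_ε = d_i`. Hence
`∑_i b_i(d_i) = 𝔼 ∑_i ε_i b_i(y_ε) ≤ 2 M`, that is, `n ≤ 2 K M √n`.
-/

open MeasureTheory Filter Topology ENNReal Set

noncomputable section

/-- The Riesz product `∏_k (1 + i ε_k d_k)`. -/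
def rieszProd {n : ℕ} (e : Fin n → ℤˣ) (d : Fin n → ℝ) : ℂ :=
  ∏ k, (1 + Complex.I * ((e k : ℤ) : ℂ) * (d k : ℂ))

lemma unit_cast_sq (u : ℤˣ) : (((u : ℤ) : ℝ)) ^ 2 = 1 := by
  rcases Int.units_eq_one_or u with h | h <;> simp [h]

lemma rieszProd_norm_le {n : ℕ} (e : Fin n → ℤˣ) (d : Fin n → ℝ) (hd : ∑ k, d k ^ 2 ≤ 1) :
    ‖rieszProd e d‖ ≤ 2 := by
  have h1 : ‖rieszProd e d‖ ^ 2 = ∏ k, (1 + d k ^ 2) := by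
    rw [rieszProd, norm_prod, ← Finset.prod_pow]
    refine Finset.prod_congr rfl fun k _ => ?_
    rw [← Complex.normSq_eq_norm_sq, Complex.normSq_apply]
    have := unit_cast_sq (e k)
    simp
    linear_combination (d k) ^ 2 * this
  have h2 : ∏ k, (1 + d k ^ 2) ≤ Real.exp (∑ k, d k ^ 2) := by
    rw [Real.exp_sum]
    refine Finset.prod_le_prod (fun k _ => by positivity) fun k _ => ?_
    linarith [Real.add_one_le_exp (d k ^ 2)]
  have h3 : Real.exp (∑ k, d k ^ 2) ≤ Real.exp 1 := Real.exp_le_exp.2 hd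
  have h4 := Real.exp_one_lt_d9
  refine abs_le_of_sq_le_sq' ?_ (by norm_num) |>.2
  rw [h1]
  linarith

/-- The first-order Walsh coefficients of the Riesz product: `∑_ε ε_i ∏_k (1 + i ε_k d_k)` is
`2^n i d_i`, since the sum over signs factors over the coordinates. -/
lemma sum_sign_mul_rieszProd {n : ℕ} (d : Fin n → ℝ) (i : Fin n) :
    ∑ e : Fin n → ℤˣ, ((e i : ℤ) : ℂ) * rieszProd e d = 2 ^ n * (Complex.I * d i) := by
  have h1 : ∀ e : Fin n → ℤˣ, ((e i : ℤ) : ℂ) * rieszProd e d =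
      ∏ k, ((if k = i then ((e k : ℤ) : ℂ) else 1) *
        (1 + Complex.I * ((e k : ℤ) : ℂ) * (d k : ℂ))) := by
    intro e
    rw [Finset.prod_mul_distrib, rieszProd, Finset.prod_ite_eq']
    simp
  have h2 : ∀ k, ∑ u : ℤˣ, ((if k = i then ((u : ℤ) : ℂ) else 1) *
        (1 + Complex.I * ((u : ℤ) : ℂ) * (d k : ℂ))) =
        2 * (if k = i then Complex.I * d k else 1) := by
    intro k
    have hu : (Finset.univ : Finset ℤˣ) = {1, -1} := rfl
    rw [hu, Finset.sum_pair (by decide)]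
    split_ifs <;> push_cast <;> simp <;> ring
  simp_rw [h1]
  rw [← Fintype.prod_sum (fun k (u : ℤˣ) => ((if k = i then ((u : ℤ) : ℂ) else 1) *
        (1 + Complex.I * ((u : ℤ) : ℂ) * (d k : ℂ))))]
  simp_rw [h2]
  rw [Finset.prod_mul_distrib, Finset.prod_ite_eq']
  simp

/-- Functionals on `ℓ_∞` with `∑_i |b_i(y)| ≤ M ‖y‖`, tested on vectors `d_i` that are square
summable to at most `1` in each coordinate. -/
lemma sum_apply_le {n : ℕ} (b : Fin n → lp (fun _ : ℕ => ℝ) ⊤ →ₗ[ℝ] ℝ)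
    (d : Fin n → lp (fun _ : ℕ => ℝ) ⊤) (M : ℝ) (hM : 0 ≤ M)
    (hb : ∀ y, ∑ i, |b i y| ≤ M * ‖y‖) (hd : ∀ j, ∑ i, (d i j) ^ 2 ≤ 1) :
    ∑ i, b i (d i) ≤ 2 * M := by
  have hbd : ∀ (e : Fin n → ℤˣ) (j : ℕ), ‖(rieszProd e (fun i => d i j)).im‖ ≤ 2 := fun e j =>
    (Complex.abs_im_le_norm _).trans (rieszProd_norm_le e _ (hd j))
  let Y : (Fin n → ℤˣ) → lp (fun _ : ℕ => ℝ) ⊤ := fun e =>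
    ⟨fun j => (rieszProd e (fun i => d i j)).im, memℓp_infty ⟨2, by
      rintro _ ⟨j, rfl⟩
      exact hbd e j⟩⟩
  have hY : ∀ e, ‖Y e‖ ≤ 2 := fun e => lp.norm_le_of_forall_le (by norm_num) (hbd e)
  have hsum : ∀ i, ∑ e, ((e i : ℤ) : ℝ) • Y e = (2 ^ n : ℝ) • d i := by
    intro i
    ext j
    have h := congrArg Complex.im (sum_sign_mul_rieszProd (fun i => d i j) i)
    rw [lp.coeFn_sum, Finset.sum_apply, lp.coeFn_smul, Pi.smul_apply, smul_eq_mul]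
    have h2 : (2 ^ n * (Complex.I * ((d i j : ℝ) : ℂ))).im = 2 ^ n * d i j := by
      have : (2 ^ n * (Complex.I * ((d i j : ℝ) : ℂ))) =
          ((2 ^ n * d i j : ℝ) : ℂ) * Complex.I := by push_cast; ring
      rw [this, Complex.im_ofReal_mul]; simp
    rw [h2] at h
    rw [← h, Complex.im_sum]
    refine Finset.sum_congr rfl fun e _ => ?_
    rw [lp.coeFn_smul, Pi.smul_apply, smul_eq_mul, ← Complex.ofReal_intCast,
      Complex.im_ofReal_mul]
  have hkey : (2 ^ n : ℝ) * ∑ i, b i (d i) = ∑ e : Fin n → ℤˣ, ∑ i, ((e i : ℤ) : ℝ) * b i (Y e) := by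
    rw [Finset.sum_comm, Finset.mul_sum]
    refine Finset.sum_congr rfl fun i _ => ?_
    have := congrArg (b i) (hsum i)
    simpa [map_sum] using this.symm
  have hle : ∑ e : Fin n → ℤˣ, ∑ i, ((e i : ℤ) : ℝ) * b i (Y e) ≤
      ∑ e : Fin n → ℤˣ, 2 * M := by
    refine Finset.sum_le_sum fun e _ => ?_
    calc ∑ i, ((e i : ℤ) : ℝ) * b i (Y e) ≤ ∑ i, |b i (Y e)| := by
          refine Finset.sum_le_sum fun i _ => ?_
          rcases Int.units_eq_one_or (e i) with h | h
          · simpa [h] using le_abs_self _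
          · simpa [h] using neg_le_abs _
      _ ≤ M * ‖Y e‖ := hb _
      _ ≤ 2 * M := by nlinarith [hY e]
  have hcard : (Fintype.card (Fin n → ℤˣ) : ℝ) = 2 ^ n := by simp
  rw [Finset.sum_const, Finset.card_univ, nsmul_eq_mul, hcard, ← hkey] at hle
  exact le_of_mul_le_mul_left hle (by positivity)

/-- The partial sums of a sequence of finite `ces_∞` norm. -/
lemma sum_abs_le_of_cesNorm (x : ℕ → ℝ) (hx : cesNorm x ≠ ⊤) (n : ℕ) :
    ∑ k ∈ Finset.range (n + 1), |x k| ≤ (n + 1) * (cesNorm x).toReal := by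
  have h : (∑ k ∈ Finset.range (n + 1), ENNReal.ofReal |x k|) / ((n : ℝ≥0∞) + 1) ≤ cesNorm x :=
    le_iSup (fun n : ℕ =>
      (∑ k ∈ Finset.range (n + 1), ENNReal.ofReal |x k|) / ((n : ℝ≥0∞) + 1)) n
  have h2 := ENNReal.toReal_mono hx h
  rw [← ENNReal.ofReal_sum_of_nonneg (fun _ _ => abs_nonneg _), ENNReal.toReal_div,
    ENNReal.toReal_ofReal (Finset.sum_nonneg fun _ _ => abs_nonneg _)] at h2
  have h3 : ((n : ℝ≥0∞) + 1).toReal = (n : ℝ) + 1 := by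
    rw [ENNReal.toReal_add (by simp) (by simp)]; simp
  rw [h3, div_le_iff₀ (by positivity)] at h2
  linarith

lemma cesNorm_single_le (n k : ℕ) (hk : n ≤ k) : cesNorm (Pi.single k (n : ℝ)) ≤ 1 := by
  refine iSup_le fun m => ENNReal.div_le_of_le_mul ?_
  rw [one_mul]
  by_cases hm : k < m + 1
  · rw [Finset.sum_eq_single k]
    · simp only [Pi.single_eq_same, Nat.abs_cast, ENNReal.ofReal_natCast]
      exact_mod_cast (by omega : n ≤ m + 1)
    · intro j _ hj
      simp [Pi.single_eq_of_ne hj]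
    · intro h
      exact absurd (Finset.mem_range.2 hm) h
  · rw [Finset.sum_eq_zero]
    · simp
    · intro j hj
      have : j ≠ k := by
        have := Finset.mem_range.1 hj
        omega
      simp [Pi.single_eq_of_ne this]

/-- The Cesàro sequence space `ces_∞` is not isomorphic to `l_∞`: there
is no bounded linear bijection from `ces_∞` onto `l_∞` with bounded inverse (equivalently,
no continuous linear equivalence). -/
theorem ces_infty_not_isomorphic_linfty :
    ∀ (E : Type*) [NormedAddCommGroup E] [NormedSpace ℝ E] [CompleteSpace E],
      RepSeq cesNorm E →
      ¬ Nonempty (E ≃L[ℝ] lp (fun _ : ℕ => ℝ) ⊤) := by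
  rintro E _ _ _ ⟨J, -, hrange, hnorm⟩ ⟨T⟩
  have hfin : ∀ e, cesNorm (J e) ≠ ⊤ := fun e => by
    have : J e ∈ Set.range J := ⟨e, rfl⟩
    rwa [hrange] at this
  set K : ℝ := ‖(T : E →L[ℝ] lp (fun _ : ℕ => ℝ) ⊤)‖ + 1 with hK
  set L : ℝ := ‖(T.symm : lp (fun _ : ℕ => ℝ) ⊤ →L[ℝ] E)‖ with hL
  have hK0 : 0 < K := by positivity
  have hL0 : 0 ≤ L := norm_nonneg _
  obtain ⟨s, hs⟩ := exists_nat_gt (4 * K * L)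
  have hs0 : (0 : ℝ) < s := lt_of_le_of_lt (by positivity) hs
  have hsN : 0 < s := by exact_mod_cast hs0
  -- A block of length `n = s ^ 2`, so that `√n = s`.
  obtain ⟨n, hn⟩ : ∃ n, n = s ^ 2 := ⟨_, rfl⟩
  have hnN : 0 < n := by rw [hn]; positivity
  have hn0 : (0 : ℝ) < n := by exact_mod_cast hnN
  have hnR : (n : ℝ) = (s : ℝ) ^ 2 := by rw [hn]; push_cast; rfl
  have hu : ∀ i : Fin n, ∃ u : E, J u = Pi.single (n + i) (n : ℝ) := fun i => by
    have : Pi.single (n + (i : ℕ)) (n : ℝ) ∈ {x : ℕ → ℝ | cesNorm x ≠ ⊤} :=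
      ne_top_of_le_ne_top ENNReal.one_ne_top (cesNorm_single_le n _ (by omega))
    rwa [← hrange] at this
  choose u hu using hu
  have hu1 : ∀ i, ‖u i‖ ≤ 1 := fun i => by
    rw [hnorm, hu]
    exact ENNReal.toReal_le_of_le_ofReal zero_le_one
      (by simpa using cesNorm_single_le n _ (by omega))
  have hTu : ∀ i, ‖T (u i)‖ ≤ K := fun i => by
    have h := (T : E →L[ℝ] lp (fun _ : ℕ => ℝ) ⊤).le_opNorm (u i)
    have h' : ‖T (u i)‖ ≤ ‖(T : E →L[ℝ] lp (fun _ : ℕ => ℝ) ⊤)‖ * ‖u i‖ := h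
    nlinarith [hu1 i, norm_nonneg (T : E →L[ℝ] lp (fun _ : ℕ => ℝ) ⊤)]
  let b : Fin n → lp (fun _ : ℕ => ℝ) ⊤ →ₗ[ℝ] ℝ := fun i =>
    (1 / (n : ℝ)) • ((LinearMap.proj (n + (i : ℕ)) : (ℕ → ℝ) →ₗ[ℝ] ℝ) ∘ₗ J ∘ₗ
      (T.symm.toLinearEquiv : lp (fun _ : ℕ => ℝ) ⊤ →ₗ[ℝ] E))
  have hbv : ∀ i y, b i y = 1 / (n : ℝ) * J (T.symm y) (n + i) := fun i y => rfl
  have hb : ∀ y, ∑ i, |b i y| ≤ (2 * L) * ‖y‖ := by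
    intro y
    have h1 : ∑ i : Fin n, |J (T.symm y) (n + i)| ≤ 2 * n * ‖T.symm y‖ := by
      have h := sum_abs_le_of_cesNorm _ (hfin (T.symm y)) (n + n - 1)
      rw [← hnorm, Nat.sub_add_cancel (by omega), Finset.sum_range_add] at h
      have hc : ((n + n - 1 : ℕ) : ℝ) + 1 = 2 * n := by
        rw [Nat.cast_sub (by omega)]; push_cast; ring
      rw [hc] at h
      rw [Fin.sum_univ_eq_sum_range (fun i => |J (T.symm y) (n + i)|) n]
      have : 0 ≤ ∑ k ∈ Finset.range n, |J (T.symm y) k| :=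
        Finset.sum_nonneg fun _ _ => abs_nonneg _
      linarith
    have h2 : ‖T.symm y‖ ≤ L * ‖y‖ :=
      (T.symm : lp (fun _ : ℕ => ℝ) ⊤ →L[ℝ] E).le_opNorm y
    calc ∑ i, |b i y| = 1 / (n : ℝ) * ∑ i : Fin n, |J (T.symm y) (n + i)| := by
          rw [Finset.mul_sum]
          refine Finset.sum_congr rfl fun i _ => ?_
          rw [hbv, abs_mul, abs_of_pos (by positivity : (0 : ℝ) < 1 / n)]
      _ ≤ 1 / (n : ℝ) * (2 * n * (L * ‖y‖)) := by gcongr; exact h1.trans (by gcongr)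
      _ = (2 * L) * ‖y‖ := by field_simp
  have hmain := sum_apply_le b (fun i => (1 / (K * s)) • T (u i)) (2 * L) (by positivity) hb (by
    intro j
    calc ∑ i, (((1 / (K * s)) • T (u i)) j) ^ 2 ≤ ∑ i : Fin n, 1 / (n : ℝ) := by
          refine Finset.sum_le_sum fun i _ => ?_
          have h1 : |T (u i) j| ≤ K := (lp.norm_apply_le_norm (by simp) (T (u i)) j).trans (hTu i)
          have h2 : (T (u i) j) ^ 2 ≤ K ^ 2 := sq_le_sq.2 (by rwa [abs_of_pos hK0])
          rw [lp.coeFn_smul, Pi.smul_apply, smul_eq_mul, mul_pow, hnR]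
          calc (1 / (K * s)) ^ 2 * (T (u i) j) ^ 2 ≤ (1 / (K * s)) ^ 2 * K ^ 2 := by gcongr
            _ = 1 / (s : ℝ) ^ 2 := by field_simp
      _ = 1 := by simp [hn0.ne']
      _ ≤ 1 := le_rfl)
  have hval : ∀ i, b i ((1 / (K * s)) • T (u i)) = 1 / (K * s) := fun i => by
    rw [map_smul, hbv, T.symm_apply_apply, hu]
    simp [hn0.ne']
  simp only [hval, Finset.sum_const, Finset.card_univ, Fintype.card_fin, nsmul_eq_mul] at hmain
  have : (n : ℝ) * (1 / (K * s)) = s / K := by rw [hnR]; field_simp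
  rw [this, div_le_iff₀ hK0] at hmain
  linarith

end
end

section
/- Let w be a locally integrable function on [0,∞) with w(t) > 0 almost everywhere and ∫_0^∞ w(t) dt = ∞, and let 1 ≤ p < ∞. Then the Tandori space L̃_p(w), consisting of all measurable f on [0,∞) for which the norm (∫_0^∞ f̃(t)^p w(t) dt)^{1/p} is finite, where f̃(t) = esssup_{s≥t} |f(s)|, is isomorphic as a Banach space to (⊕_{n∈ℤ} L_∞[0,1])_{l_p}. -/
/-!
Let `a n` be the point where the primitive of `w` equals `2 ^ n` (`exists_dyadic_partition`), and
let `b n` be the essential supremum of `|f|` on the block `[a n, a (n+1))`, which has `w`-mass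
`2 ^ n`. Since `f̃` is decreasing and `f̃(a n) = sup_{k ≥ n} b k`, summing over the blocks shows
that `∫ f̃ ^ p w` and `∑ 2 ^ n (b n) ^ p` are equal up to a factor `2` (`lintegral_tilde_le`,
`tsum_blockSup_le`). Transporting each block affinely to `[0,1]` and scaling it by `2 ^ (n / p)`
(`pull`) therefore gives a linear map into `(⊕ L_∞[0,1])_{l_p}` that is bounded above and below.
It is onto because the blocks of a function may be prescribed independently (`exists_pull_eq`).
-/

open MeasureTheory Filter Topology ENNReal Set

noncomputable section

/-- The decreasing majorant of a measurable function on `[0,∞)`: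
`f̃(t) = esssup_{s ≥ t} |f(s)|`, with values in `ℝ≥0∞`. -/
def tildeFun (f : ℝ → ℝ) (t : ℝ) : ℝ≥0∞ :=
  essSup (fun s => ENNReal.ofReal |f s|) (volume.restrict (Set.Ici t))

/-- The norm of the weighted Tandori space `L̃_p(w)` on `[0,∞)`:
`‖f‖ = (∫_0^∞ f̃(t)^p w(t) dt)^{1/p}`. -/
def tandoriLpNorm (w : ℝ → ℝ) (p : ℝ) (f : ℝ →ₘ[volume.restrict (Set.Ici 0)] ℝ) :
    ℝ≥0∞ :=
  (∫⁻ t in Set.Ici (0 : ℝ), tildeFun f t ^ p * ENNReal.ofReal (w t)) ^ (1 / p)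

/-! ### The dyadic partition -/

/-- The points `a n` at which the primitive `W(t) = ∫_0^t w` takes the value `2 ^ n`. They cut
`(0,∞)` into blocks of `w`-mass `2 ^ n`: `a n → 0` as `n → -∞` because `w > 0` a.e., and all
values `2 ^ n` are attained because `W` is unbounded. -/
theorem exists_dyadic_partition (w : ℝ → ℝ) (hw_loc : LocallyIntegrableOn w (Set.Ici 0))
    (hw_pos : ∀ᵐ t ∂(volume.restrict (Set.Ici (0 : ℝ))), 0 < w t)
    (hw_int : ∫⁻ t in Set.Ici (0 : ℝ), ENNReal.ofReal (w t) = ⊤) :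
    ∃ a : ℤ → ℝ, StrictMono a ∧ (∀ n, 0 < a n) ∧
      (∀ t, 0 < t → ∃ n, t ∈ Ico (a n) (a (n + 1))) ∧
      ∀ n, ∫⁻ t in Ico (a n) (a (n + 1)), ENNReal.ofReal (w t) = ENNReal.ofReal (2 ^ n) := by
  -- extending `w` by zero makes its primitive continuous on the whole line
  set v : ℝ → ℝ := (Ici (0 : ℝ)).indicator w with hv
  have hv_int : ∀ x y, IntervalIntegrable v volume x y := by
    intro x y
    rw [intervalIntegrable_iff']
    rw [hv, IntegrableOn, integrable_indicator_iff measurableSet_Ici, IntegrableOn,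
      Measure.restrict_restrict measurableSet_Ici]
    exact hw_loc.integrableOn_compact_subset inter_subset_left
      (isCompact_uIcc.inter_left isClosed_Ici)
  set W : ℝ → ℝ := fun t => ∫ x in (0 : ℝ)..t, v x with hW
  have hWc : Continuous W := intervalIntegral.continuous_primitive hv_int 0
  have hv0 : ∀ᵐ t, 0 ≤ v t := by
    have := (ae_restrict_iff' measurableSet_Ici).1 hw_pos
    filter_upwards [this] with t ht
    by_cases h : t ∈ Ici (0 : ℝ)
    · simp only [hv, indicator_of_mem h]; exact (ht h).le
    · simp [hv, indicator_of_notMem h]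
  have key : ∀ x y, 0 ≤ x → x ≤ y →
      ∫⁻ t in Ico x y, ENNReal.ofReal (w t) = ENNReal.ofReal (W y - W x) := by
    intro x y hx hxy
    have h1 : W y - W x = ∫ t in x..y, v t :=
      intervalIntegral.integral_interval_sub_left (hv_int _ _) (hv_int _ _)
    rw [h1, intervalIntegral.integral_of_le hxy, ← setIntegral_congr_set Ico_ae_eq_Ioc,
      ofReal_integral_eq_lintegral_ofReal]
    · refine setLIntegral_congr_fun measurableSet_Ico fun t ht => ?_
      simp [hv, indicator_of_mem (show t ∈ Ici (0 : ℝ) from hx.trans ht.1)]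
    · exact ((intervalIntegrable_iff_integrableOn_Ico_of_le hxy).1 (hv_int x y))
    · exact ae_restrict_of_ae hv0
  have hW0 : W 0 = 0 := by simp [hW]
  have hWm : Monotone W := by
    intro x y hxy
    have h1 : W y - W x = ∫ t in x..y, v t :=
      intervalIntegral.integral_interval_sub_left (hv_int _ _) (hv_int _ _)
    have h2 : 0 ≤ ∫ t in x..y, v t := intervalIntegral.integral_nonneg_of_ae hxy hv0
    linarith
  have hWpos : ∀ t, 0 < t → 0 < W t := by
    intro t ht
    by_contra hcon
    have hz : ∫⁻ s in Ico 0 t, ENNReal.ofReal (w s) = 0 := by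
      rw [key 0 t le_rfl ht.le, hW0, sub_zero]
      exact ENNReal.ofReal_of_nonpos (not_lt.1 hcon)
    have hm : AEMeasurable (fun s => ENNReal.ofReal (w s)) (volume.restrict (Ico 0 t)) := by
      have : IntegrableOn w (Icc 0 t) :=
        hw_loc.integrableOn_compact_subset Icc_subset_Ici_self isCompact_Icc
      exact (this.mono_set Ico_subset_Icc_self).aemeasurable.ennreal_ofReal
    rw [lintegral_eq_zero_iff' hm] at hz
    have hp : ∀ᵐ s ∂(volume.restrict (Ico 0 t)), 0 < w s :=
      ae_restrict_of_ae_restrict_of_subset Ico_subset_Ici_self hw_pos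
    have hf : ∀ᵐ s ∂(volume.restrict (Ico 0 t)), False := by
      filter_upwards [hz, hp] with s h1 h2
      simp at h1
      linarith
    rw [ae_iff] at hf
    simp at hf
    linarith
  have hWtop : ∀ M : ℝ, ∃ t, 0 ≤ t ∧ M ≤ W t := by
    intro M
    by_contra! hcon
    have hU : Ici (0 : ℝ) = ⋃ n : ℕ, Ico (0 : ℝ) n := by
      ext s
      simp only [mem_Ici, mem_iUnion, mem_Ico]
      exact ⟨fun h => (exists_nat_gt s).imp fun n hn => ⟨h, hn⟩, fun ⟨n, h, _⟩ => h⟩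
    rw [hU, setLIntegral_iUnion_of_directed] at hw_int
    · have : (⨆ n : ℕ, ∫⁻ t in Ico (0 : ℝ) n, ENNReal.ofReal (w t)) ≤ ENNReal.ofReal M := by
        refine iSup_le fun n => ?_
        rw [key 0 n le_rfl n.cast_nonneg, hW0, sub_zero]
        exact ENNReal.ofReal_le_ofReal (hcon n n.cast_nonneg).le
      rw [hw_int] at this
      exact absurd this (by simp)
    · exact Monotone.directed_le fun m n hmn =>
        Ico_subset_Ico_right (by exact_mod_cast hmn)
  have hex : ∀ n : ℤ, ∃ t, 0 ≤ t ∧ W t = 2 ^ n := by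
    intro n
    obtain ⟨M, hM0, hM⟩ := hWtop (2 ^ n)
    obtain ⟨t, ht, h⟩ := intermediate_value_Icc hM0 hWc.continuousOn
      (show (2 : ℝ) ^ n ∈ Icc (W 0) (W M) from ⟨by rw [hW0]; positivity, hM⟩)
    exact ⟨t, ht.1, h⟩
  choose a ha0 ha using hex
  have hlt : ∀ {x y}, W x < W y → x < y := fun h => hWm.reflect_lt h
  have hpow : StrictMono fun n : ℤ => (2 : ℝ) ^ n := zpow_right_strictMono₀ one_lt_two
  have hmono : StrictMono a := fun m n hmn => hlt (by rw [ha, ha]; exact hpow hmn)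
  refine ⟨a, hmono, fun n => ?_, fun t ht => ?_, fun n => ?_⟩
  · apply hlt
    rw [ha, hW0]; positivity
  · obtain ⟨n, hn, hn'⟩ := exists_mem_Ico_zpow (hWpos t ht) (one_lt_two (α := ℝ))
    have h1 : a (n - 1) < t := hlt (by rw [ha]; exact (hpow (sub_one_lt n)).trans_le hn)
    have h2 : t < a (n + 1) := hlt (by rw [ha]; exact hn')
    -- monotonicity of `W` alone does not order `t` and `a n` when `W t = 2 ^ n`
    rcases lt_or_ge t (a n) with h | h
    · exact ⟨n - 1, h1.le, by simpa using h⟩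
    · exact ⟨n, h, h2⟩
  · rw [key _ _ (ha0 n) (hmono (lt_add_one n)).le, ha, ha, zpow_add_one₀ two_ne_zero]
    congr 1; ring

/-- The affine bijection `[0,1] → [x,y]` transports Lebesgue measure to a nonzero multiple of
Lebesgue measure, so it preserves essential suprema. -/
theorem map_affine_restrict {x y : ℝ} (hxy : x < y) :
    ∃ c : ℝ≥0∞, c ≠ 0 ∧ (volume.restrict (Icc (0 : ℝ) 1)).map (fun s => x + (y - x) * s) =
      c • volume.restrict (Ico x y) := by
  have hd : 0 < y - x := sub_pos.2 hxy
  refine ⟨ENNReal.ofReal |(y - x)⁻¹|, by simpa using hd.ne', ?_⟩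
  have hpre : (fun s => x + (y - x) * s) ⁻¹' (Icc x y) = Icc (0 : ℝ) 1 := by
    ext s
    simp only [mem_preimage, mem_Icc]
    constructor
    · rintro ⟨h1, h2⟩; constructor <;> nlinarith
    · rintro ⟨h1, h2⟩; constructor <;> nlinarith
  have hm : Measurable (fun s => x + (y - x) * s) := by fun_prop
  rw [Measure.restrict_congr_set (Ico_ae_eq_Icc (a := x) (b := y)), ← hpre,
    ← Measure.restrict_map hm measurableSet_Icc]
  have : Measure.map (fun s => x + (y - x) * s) (volume : Measure ℝ) =
      ENNReal.ofReal |(y - x)⁻¹| • volume := by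
    have h : (fun s => x + (y - x) * s) = (fun s => x + s) ∘ (fun s => (y - x) * s) := rfl
    rw [h, ← Measure.map_map (by fun_prop) (by fun_prop), Real.map_volume_mul_left hd.ne',
      Measure.map_smul, map_add_left_eq_self]
  rw [this, Measure.restrict_smul]

theorem tsum_two_zpow_le (k : ℤ) :
    ∑' n : ℤ, (if n ≤ k then ENNReal.ofReal (2 ^ n) else 0) = 2 * ENNReal.ofReal (2 ^ k) := by
  have hinj : Function.Injective fun m : ℕ => k - (m : ℤ) := fun m m' h => by
    simpa using h
  rw [← hinj.tsum_eq]
  · have : ∀ m : ℕ, (if k - (m : ℤ) ≤ k then ENNReal.ofReal ((2 : ℝ) ^ (k - (m : ℤ))) else 0) =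
        ENNReal.ofReal ((2 : ℝ) ^ k * (1 / 2) ^ m) := by
      intro m
      rw [if_pos (by omega), zpow_sub₀ two_ne_zero]
      simp [div_eq_mul_inv]
    simp_rw [this]
    rw [← ENNReal.ofReal_tsum_of_nonneg (fun n => by positivity)
      (summable_geometric_two.mul_left _), tsum_mul_left, tsum_geometric_two, mul_comm,
      ENNReal.ofReal_mul zero_le_two]
    simp
  · intro n hn
    have : n ≤ k := by
      by_contra h
      simp [h] at hn
    exact ⟨(k - n).toNat, by simp; omega⟩

/-! ### Equivalence of the Tandori norm and the block norm -/

/-- The essential supremum of `|f|` over the `n`-th block `[a n, a (n+1))`. -/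
def blockSup (a : ℤ → ℝ) (f : ℝ → ℝ) (n : ℤ) : ℝ≥0∞ :=
  essSup (fun s => ENNReal.ofReal |f s|) (volume.restrict (Ico (a n) (a (n + 1))))

theorem tildeFun_antitone (f : ℝ → ℝ) : Antitone (tildeFun f) := fun _ _ h =>
  essSup_mono_measure' (Measure.restrict_mono (Ici_subset_Ici.2 h) le_rfl)

theorem pairwise_disjoint_blocks {a : ℤ → ℝ} (ha : StrictMono a) :
    Pairwise (Function.onFun Disjoint fun n => Ico (a n) (a (n + 1))) := by
  simpa using ha.monotone.pairwise_disjoint_on_Ico_succ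

theorem lintegral_Ici_eq_tsum_blocks {a : ℤ → ℝ} (ha : StrictMono a) (ha0 : ∀ n, 0 < a n)
    (hcov : ∀ t, 0 < t → ∃ n, t ∈ Ico (a n) (a (n + 1))) (F : ℝ → ℝ≥0∞) :
    ∫⁻ t in Ici (0 : ℝ), F t = ∑' n, ∫⁻ t in Ico (a n) (a (n + 1)), F t := by
  have hU : Ioi (0 : ℝ) = ⋃ n, Ico (a n) (a (n + 1)) := by
    ext t
    simp only [mem_iUnion]
    exact ⟨hcov t, fun ⟨n, h⟩ => (ha0 n).trans_le h.1⟩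
  rw [← setLIntegral_congr Ioi_ae_eq_Ici, hU,
    lintegral_iUnion (fun _ => measurableSet_Ico) (pairwise_disjoint_blocks ha)]

/-- The decreasing majorant at `a n` is the supremum of the block suprema from `n` on, and its
`p`-th power is bounded by the sum of their `p`-th powers. -/
theorem tildeFun_rpow_le_tsum {a : ℤ → ℝ} (ha : StrictMono a) (ha0 : ∀ n, 0 < a n)
    (hcov : ∀ t, 0 < t → ∃ n, t ∈ Ico (a n) (a (n + 1))) {p : ℝ} (hp : 0 < p)
    (f : ℝ → ℝ) (n : ℤ) :
    tildeFun f (a n) ^ p ≤ ∑' k, if n ≤ k then blockSup a f k ^ p else 0 := by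
  rw [← ENNReal.le_rpow_inv_iff hp]
  refine essSup_le_of_ae_le _ ?_
  have h : ∀ᵐ s, ∀ k, s ∈ Ico (a k) (a (k + 1)) → ENNReal.ofReal |f s| ≤ blockSup a f k :=
    ae_all_iff.2 fun k => (ae_restrict_iff' measurableSet_Ico).1 (ENNReal.ae_le_essSup _)
  filter_upwards [ae_restrict_of_ae h, ae_restrict_mem measurableSet_Ici] with s hs hsn
  obtain ⟨k, hk⟩ := hcov s ((ha0 n).trans_le hsn)
  have hnk : n ≤ k := by
    have : a n < a (k + 1) := lt_of_le_of_lt hsn hk.2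
    have := ha.lt_iff_lt.1 this
    omega
  refine (hs k hk).trans ?_
  rw [ENNReal.le_rpow_inv_iff hp]
  refine le_trans ?_ (ENNReal.le_tsum k)
  rw [if_pos hnk]

/-- Bounding `f̃` on each block by its value at the left end point and interchanging sums leaves
the geometric series `∑_{n ≤ k} 2 ^ n = 2 * 2 ^ k`. -/
theorem lintegral_tilde_le {a : ℤ → ℝ} (ha : StrictMono a) (ha0 : ∀ n, 0 < a n)
    (hcov : ∀ t, 0 < t → ∃ n, t ∈ Ico (a n) (a (n + 1))) {p : ℝ} (hp : 0 < p)
    {w : ℝ → ℝ} (hw : AEMeasurable w (volume.restrict (Ici 0)))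
    (hwa : ∀ n, ∫⁻ t in Ico (a n) (a (n + 1)), ENNReal.ofReal (w t) = ENNReal.ofReal (2 ^ n))
    (f : ℝ → ℝ) :
    ∫⁻ t in Ici (0 : ℝ), tildeFun f t ^ p * ENNReal.ofReal (w t) ≤
      2 * ∑' n, ENNReal.ofReal (2 ^ n) * blockSup a f n ^ p := by
  rw [lintegral_Ici_eq_tsum_blocks ha ha0 hcov]
  calc ∑' n, ∫⁻ t in Ico (a n) (a (n + 1)), tildeFun f t ^ p * ENNReal.ofReal (w t)
      ≤ ∑' n, ∑' k, (if n ≤ k then ENNReal.ofReal (2 ^ n) else 0) * blockSup a f k ^ p := by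
        refine ENNReal.tsum_le_tsum fun n => ?_
        calc ∫⁻ t in Ico (a n) (a (n + 1)), tildeFun f t ^ p * ENNReal.ofReal (w t)
            ≤ ∫⁻ t in Ico (a n) (a (n + 1)), tildeFun f (a n) ^ p * ENNReal.ofReal (w t) := by
              refine setLIntegral_mono' measurableSet_Ico fun t ht => ?_
              gcongr
              exact tildeFun_antitone f ht.1
          _ = tildeFun f (a n) ^ p * ENNReal.ofReal (2 ^ n) := by
              rw [lintegral_const_mul'' _ ?_, hwa]
              exact (hw.mono_measure (Measure.restrict_mono
                (fun t ht => (ha0 n).le.trans ht.1) le_rfl)).ennreal_ofReal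
          _ ≤ (∑' k, if n ≤ k then blockSup a f k ^ p else 0) * ENNReal.ofReal (2 ^ n) := by
              gcongr
              exact tildeFun_rpow_le_tsum ha ha0 hcov hp f n
          _ = _ := by
              rw [← ENNReal.tsum_mul_right]
              refine tsum_congr fun k => ?_
              split_ifs <;> simp [mul_comm]
    _ = ∑' k, (∑' n, if n ≤ k then ENNReal.ofReal (2 ^ n) else 0) * blockSup a f k ^ p := by
        rw [ENNReal.tsum_comm]
        simp_rw [ENNReal.tsum_mul_right]
    _ = _ := by
        simp_rw [tsum_two_zpow_le, mul_assoc, ENNReal.tsum_mul_left]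

/-- On each block `f̃` is at least its value at the right end point, hence at least the supremum
over the next block, whose `w`-mass is twice as large. -/
theorem tsum_blockSup_le {a : ℤ → ℝ} (ha : StrictMono a) (ha0 : ∀ n, 0 < a n)
    (hcov : ∀ t, 0 < t → ∃ n, t ∈ Ico (a n) (a (n + 1))) {p : ℝ} (hp : 0 < p)
    {w : ℝ → ℝ}
    (hwa : ∀ n, ∫⁻ t in Ico (a n) (a (n + 1)), ENNReal.ofReal (w t) = ENNReal.ofReal (2 ^ n))
    (f : ℝ → ℝ) :
    ∑' n, ENNReal.ofReal (2 ^ n) * blockSup a f n ^ p ≤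
      2 * ∫⁻ t in Ici (0 : ℝ), tildeFun f t ^ p * ENNReal.ofReal (w t) := by
  rw [lintegral_Ici_eq_tsum_blocks ha ha0 hcov, ← ENNReal.tsum_mul_left,
    ← (Equiv.addRight (1 : ℤ)).tsum_eq]
  refine ENNReal.tsum_le_tsum fun n => ?_
  simp only [Equiv.coe_addRight]
  have h2 : ENNReal.ofReal (2 ^ (n + 1)) = 2 * ENNReal.ofReal (2 ^ n) := by
    rw [zpow_add_one₀ two_ne_zero, mul_comm, ENNReal.ofReal_mul zero_le_two]
    simp
  rw [h2, mul_assoc]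
  gcongr
  calc ENNReal.ofReal (2 ^ n) * blockSup a f (n + 1) ^ p
      ≤ tildeFun f (a (n + 1)) ^ p * ENNReal.ofReal (2 ^ n) := by
        rw [mul_comm]
        gcongr
        exact essSup_mono_measure' (Measure.restrict_mono Ico_subset_Ici_self le_rfl)
    _ ≤ ∫⁻ t in Ico (a n) (a (n + 1)), tildeFun f (a (n + 1)) ^ p * ENNReal.ofReal (w t) := by
        rw [← hwa n]
        exact lintegral_const_mul_le _ _
    _ ≤ _ := by
        refine setLIntegral_mono' measurableSet_Ico fun t ht => ?_
        gcongr
        exact tildeFun_antitone f ht.2.le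

/-! ### The coordinate maps -/

theorem quasiMeasurePreserving_affine {x y : ℝ} (hx : 0 ≤ x) (hxy : x < y) :
    Measure.QuasiMeasurePreserving (fun s => x + (y - x) * s)
      (volume.restrict (Icc (0 : ℝ) 1)) (volume.restrict (Ici 0)) := by
  obtain ⟨c, -, hc⟩ := map_affine_restrict hxy
  refine ⟨by fun_prop, ?_⟩
  rw [hc]
  exact (Measure.smul_absolutelyContinuous).trans (Measure.absolutelyContinuous_of_le
    (Measure.restrict_mono (fun t ht => hx.trans ht.1) le_rfl))

/-- The `n`-th coordinate of the isomorphism: the `n`-th block of `f`, transported affinely to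
`[0,1]` and multiplied by `2 ^ (n / p)`. -/
def pull (a : ℤ → ℝ) (p : ℝ) (f : ℝ → ℝ) (n : ℤ) : ℝ → ℝ :=
  fun s => (2 : ℝ) ^ ((n : ℝ) / p) * f (a n + (a (n + 1) - a n) * s)

theorem eLpNorm_pull_rpow {a : ℤ → ℝ} (ha : StrictMono a) {p : ℝ} (hp : 0 < p)
    (f : ℝ → ℝ) (n : ℤ) :
    eLpNorm (pull a p f n) ⊤ (volume.restrict (Icc (0 : ℝ) 1)) ^ p =
      ENNReal.ofReal (2 ^ n) * blockSup a f n ^ p := by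
  have hlt : a n < a (n + 1) := ha (lt_add_one n)
  obtain ⟨c, hc0, hc⟩ := map_affine_restrict hlt
  have hemb : MeasurableEmbedding fun s => a n + (a (n + 1) - a n) * s := by
    refine Continuous.measurableEmbedding (by fun_prop) fun s s' h => ?_
    have : a (n + 1) - a n ≠ 0 := (sub_pos.2 hlt).ne'
    simpa [this] using h
  have h1 : blockSup a f n = essSup
      ((fun s => ENNReal.ofReal |f s|) ∘ fun s => a n + (a (n + 1) - a n) * s)
      (volume.restrict (Icc (0 : ℝ) 1)) := by
    rw [← hemb.essSup_map_measure, hc, essSup_ennreal_smul_measure hc0]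
    rfl
  have h2 : eLpNorm (pull a p f n) ⊤ (volume.restrict (Icc (0 : ℝ) 1)) =
      ENNReal.ofReal ((2 : ℝ) ^ ((n : ℝ) / p)) * blockSup a f n := by
    rw [h1, eLpNorm_exponent_top, eLpNormEssSup, ← ENNReal.essSup_const_mul]
    congr 1
    funext s
    rw [Real.enorm_eq_ofReal_abs, pull, abs_mul, abs_of_nonneg (by positivity),
      ENNReal.ofReal_mul (by positivity)]
    rfl
  rw [h2, ENNReal.mul_rpow_of_nonneg _ _ hp.le, ENNReal.ofReal_rpow_of_nonneg (by positivity) hp.le,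
    ← Real.rpow_mul zero_le_two, div_mul_cancel₀ _ hp.ne', Real.rpow_intCast]

theorem pull_congr {a : ℤ → ℝ} (ha : StrictMono a) (ha0 : ∀ n, 0 < a n) (p : ℝ) {f g : ℝ → ℝ}
    (h : f =ᵐ[volume.restrict (Ici 0)] g) (n : ℤ) :
    pull a p f n =ᵐ[volume.restrict (Icc (0 : ℝ) 1)] pull a p g n := by
  filter_upwards [(quasiMeasurePreserving_affine (ha0 n).le (ha (lt_add_one n))).ae_eq h] with s hs
  simp only [pull]
  simp only [Function.comp] at hs
  rw [hs]

theorem aestronglyMeasurable_pull {a : ℤ → ℝ} (ha : StrictMono a) (ha0 : ∀ n, 0 < a n) (p : ℝ)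
    {f : ℝ → ℝ} (h : AEStronglyMeasurable f (volume.restrict (Ici 0))) (n : ℤ) :
    AEStronglyMeasurable (pull a p f n) (volume.restrict (Icc (0 : ℝ) 1)) :=
  (h.comp_quasiMeasurePreserving
    (quasiMeasurePreserving_affine (ha0 n).le (ha (lt_add_one n)))).const_mul _

/-- Every sequence of measurable functions on `[0,1]` consists of the coordinates of some
measurable function, obtained by gluing the blocks. -/
theorem exists_pull_eq {a : ℤ → ℝ} (ha : StrictMono a) (p : ℝ) (x : ℤ → ℝ → ℝ)
    (hx : ∀ n, Measurable (x n)) :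
    ∃ g : ℝ → ℝ, Measurable g ∧
      ∀ n, pull a p g n =ᵐ[volume.restrict (Icc (0 : ℝ) 1)] x n := by
  obtain ⟨g, hg, hgx⟩ := exists_measurable_piecewise (fun n => Ico (a n) (a (n + 1)))
    (fun _ => measurableSet_Ico)
    (fun n t => ((2 : ℝ) ^ ((n : ℝ) / p))⁻¹ * x n ((t - a n) / (a (n + 1) - a n)))
    (fun n => ((hx n).comp (by fun_prop)).const_mul _)
    (fun i j hij => by
      have := (pairwise_disjoint_blocks ha hij).inter_eq
      simp only at this ⊢
      rw [this]
      exact eqOn_empty _ _)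
  refine ⟨g, hg, fun n => ?_⟩
  rw [← Measure.restrict_congr_set (Ico_ae_eq_Icc (a := (0 : ℝ)) (b := 1))]
  filter_upwards [ae_restrict_mem measurableSet_Ico] with s hs
  have hd : 0 < a (n + 1) - a n := sub_pos.2 (ha (lt_add_one n))
  have hmem : a n + (a (n + 1) - a n) * s ∈ Ico (a n) (a (n + 1)) :=
    ⟨by nlinarith [hs.1], by nlinarith [hs.2]⟩
  have hc : (2 : ℝ) ^ ((n : ℝ) / p) ≠ 0 := by positivity
  simp only [pull]
  rw [hgx n hmem]
  simp only
  rw [mul_inv_cancel_left₀ hc, add_sub_cancel_left, mul_div_cancel_left₀ _ hd.ne']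

/-! ### Norms in the `l_p` sum -/

theorem memℓp_iff_tsum_enorm {F : Type*} [NormedAddCommGroup F] {p : ℝ} (hp : 0 < p)
    (x : ℤ → F) :
    Memℓp x (ENNReal.ofReal p) ↔ ∑' n, ‖x n‖ₑ ^ p ≠ ⊤ := by
  rw [memℓp_gen_iff (by rwa [ENNReal.toReal_ofReal hp.le]), ENNReal.toReal_ofReal hp.le]
  have : ∀ n, ‖x n‖ₑ ^ p = ENNReal.ofReal (‖x n‖ ^ p) := fun n => by
    rw [← ofReal_norm, ENNReal.ofReal_rpow_of_nonneg (norm_nonneg _) hp.le]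
  simp_rw [this]
  constructor
  · intro h
    exact h.tsum_ofReal_ne_top
  · intro h
    have := ENNReal.summable_toReal h
    refine this.congr fun n => ?_
    rw [ENNReal.toReal_ofReal (by positivity)]

theorem lp_norm_eq_toReal {F : Type*} [NormedAddCommGroup F] {p : ℝ} (hp : 0 < p)
    (x : lp (fun _ : ℤ => F) (ENNReal.ofReal p)) :
    ‖x‖ = ((∑' n, ‖x n‖ₑ ^ p) ^ (1 / p)).toReal := by
  rw [lp.norm_eq_tsum_rpow (by rwa [ENNReal.toReal_ofReal hp.le]), ENNReal.toReal_ofReal hp.le,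
    ← ENNReal.toReal_rpow, ENNReal.tsum_toReal_eq]
  · simp_rw [← ENNReal.toReal_rpow, toReal_enorm]
  · intro n
    exact ENNReal.rpow_ne_top_of_nonneg hp.le enorm_ne_top

theorem rpow_toReal_le_of_le_two_mul {p : ℝ} (hp : 1 ≤ p) {A B : ℝ≥0∞} (hB : B ≠ ⊤)
    (h : A ≤ 2 * B) : (A ^ (1 / p)).toReal ≤ 2 * (B ^ (1 / p)).toReal := by
  have hp0 : 0 ≤ 1 / p := by positivity
  have h1 : A ^ (1 / p) ≤ 2 * B ^ (1 / p) :=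
    calc A ^ (1 / p) ≤ (2 * B) ^ (1 / p) := by gcongr
      _ = 2 ^ (1 / p) * B ^ (1 / p) := ENNReal.mul_rpow_of_nonneg _ _ hp0
      _ ≤ 2 ^ (1 : ℝ) * B ^ (1 / p) := by
          gcongr
          · norm_num
          · rw [div_le_one (by linarith)]; exact hp
      _ = _ := by simp
  have := ENNReal.toReal_mono
    (ENNReal.mul_ne_top (by simp) (ENNReal.rpow_ne_top_of_nonneg hp0 hB)) h1
  simpa using this

/-! ### The isomorphism -/

/-- Let `w` be locally integrable on `[0,∞)`, positive a.e., with
`∫_0^∞ w = ∞`, and let `1 ≤ p < ∞`.  Then the Tandori space `L̃_p(w)` is isomorphic, as a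
Banach space, to `(⊕_{n ∈ ℤ} L_∞[0,1])_{l_p}`. -/
theorem tandori_Lp_weighted_isomorphic_lp_sum_of_Linfty
    (w : ℝ → ℝ) (hw_loc : LocallyIntegrableOn w (Set.Ici 0))
    (hw_pos : ∀ᵐ t ∂(volume.restrict (Set.Ici (0 : ℝ))), 0 < w t)
    (hw_int : ∫⁻ t in Set.Ici (0 : ℝ), ENNReal.ofReal (w t) = ⊤)
    (p : ℝ) (hp : 1 ≤ p) [Fact ((1 : ℝ≥0∞) ≤ ENNReal.ofReal p)] :
    ∀ (E : Type*) [NormedAddCommGroup E] [NormedSpace ℝ E] [CompleteSpace E],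
      RepFun (Set.Ici 0) (tandoriLpNorm w p) E →
      Nonempty (E ≃L[ℝ]
        lp (fun _ : ℤ => Lp ℝ ⊤ (volume.restrict (Set.Icc (0 : ℝ) 1)))
          (ENNReal.ofReal p)) := by
  rintro E _ _ _ ⟨J, -, hJr, hJn⟩
  obtain ⟨a, ha, ha0, hcov, hwa⟩ := exists_dyadic_partition w hw_loc hw_pos hw_int
  have hp0 : 0 < p := zero_lt_one.trans_le hp
  have hwm : AEMeasurable w (volume.restrict (Ici 0)) :=
    hw_loc.aestronglyMeasurable.aemeasurable
  -- `I f` is the `p`-th power of the Tandori norm, `S f` that of the norm of the coordinates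
  set I : (ℝ → ℝ) → ℝ≥0∞ := fun f =>
    ∫⁻ t in Ici (0 : ℝ), tildeFun f t ^ p * ENNReal.ofReal (w t) with hI
  set S : (ℝ → ℝ) → ℝ≥0∞ := fun f => ∑' n,
    eLpNorm (pull a p f n) ⊤ (volume.restrict (Icc (0 : ℝ) 1)) ^ p with hS
  have hSI : ∀ f, S f ≤ 2 * I f := fun f => by
    simp only [hS, eLpNorm_pull_rpow ha hp0]
    exact tsum_blockSup_le ha ha0 hcov hp0 hwa f
  have hIS : ∀ f, I f ≤ 2 * S f := fun f => by
    simp only [hS, eLpNorm_pull_rpow ha hp0]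
    exact lintegral_tilde_le ha ha0 hcov hp0 hwm hwa f
  have hN : ∀ f, tandoriLpNorm w p f = I f ^ (1 / p) := fun f => rfl
  have hNtop : ∀ f, tandoriLpNorm w p f ≠ ⊤ ↔ I f ≠ ⊤ := fun f => by
    rw [hN, Ne, ENNReal.rpow_eq_top_iff_of_pos (by positivity)]
  have hIE : ∀ e, I (J e) ≠ ⊤ := fun e => by
    rw [← hNtop]
    have : J e ∈ Set.range J := ⟨e, rfl⟩
    rwa [hJr] at this
  have hSE : ∀ e, S (J e) ≠ ⊤ := fun e =>
    ne_top_of_le_ne_top (ENNReal.mul_ne_top (by simp) (hIE e)) (hSI _)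
  have hmem : ∀ e n, MemLp (pull a p (J e) n) ⊤ (volume.restrict (Icc (0 : ℝ) 1)) := by
    intro e n
    refine ⟨aestronglyMeasurable_pull ha ha0 p (J e).aestronglyMeasurable n, ?_⟩
    have := ENNReal.ne_top_of_tsum_ne_top (hSE e) n
    rw [lt_top_iff_ne_top]
    intro h
    rw [h, ENNReal.top_rpow_of_pos hp0] at this
    exact this rfl
  have hsum : ∀ e, ∑' n, ‖(hmem e n).toLp‖ₑ ^ p = S (J e) := fun e => by
    simp only [hS, Lp.enorm_toLp]
  let T : E →ₗ[ℝ] lp (fun _ : ℤ => Lp ℝ ⊤ (volume.restrict (Set.Icc (0 : ℝ) 1)))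
      (ENNReal.ofReal p) :=
    { toFun := fun e => ⟨fun n => (hmem e n).toLp,
        (memℓp_iff_tsum_enorm hp0 _).2 (by rw [hsum]; exact hSE e)⟩
      map_add' := fun e e' => by
        refine lp.ext (funext fun n => ?_)
        change (hmem (e + e') n).toLp = (hmem e n).toLp + (hmem e' n).toLp
        rw [← MemLp.toLp_add, MemLp.toLp_eq_toLp_iff]
        have h : (J (e + e') : ℝ → ℝ) =ᵐ[volume.restrict (Ici 0)] J e + J e' := by
          rw [map_add]; exact AEEqFun.coeFn_add _ _
        refine (pull_congr ha ha0 p h n).trans (Eventually.of_forall fun s => ?_)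
        simp [pull, mul_add]
      map_smul' := fun r e => by
        refine lp.ext (funext fun n => ?_)
        change (hmem (r • e) n).toLp = r • (hmem e n).toLp
        rw [← MemLp.toLp_const_smul, MemLp.toLp_eq_toLp_iff]
        have h : (J (r • e) : ℝ → ℝ) =ᵐ[volume.restrict (Ici 0)] r • (J e : ℝ → ℝ) := by
          rw [map_smul]; exact AEEqFun.coeFn_smul _ _
        refine (pull_congr ha ha0 p h n).trans (Eventually.of_forall fun s => ?_)
        simp [pull, mul_left_comm] }
  have hTn : ∀ e, ‖T e‖ = (S (J e) ^ (1 / p)).toReal := fun e => by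
    rw [lp_norm_eq_toReal hp0, ← hsum]
    rfl
  have hup : ∀ e, ‖T e‖ ≤ 2 * ‖e‖ := fun e => by
    rw [hTn, hJn, hN]
    exact rpow_toReal_le_of_le_two_mul hp (hIE e) (hSI _)
  have hlow : ∀ e, ‖e‖ ≤ 2 * ‖T e‖ := fun e => by
    rw [hTn, hJn, hN]
    exact rpow_toReal_le_of_le_two_mul hp (hSE e) (hIS _)
  have hinj : Function.Injective T := by
    rw [injective_iff_map_eq_zero]
    intro e he
    have := hlow e
    rw [he, norm_zero, mul_zero] at this
    exact norm_le_zero_iff.1 this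
  have hsurj : Function.Surjective T := by
    intro x
    obtain ⟨g, hg, hgx⟩ := exists_pull_eq ha p (fun n => (x n : ℝ → ℝ))
      (fun n => (Lp.stronglyMeasurable (x n)).measurable)
    set f : ℝ →ₘ[volume.restrict (Ici 0)] ℝ := AEEqFun.mk g hg.aestronglyMeasurable
    have hf : ∀ n, pull a p f n =ᵐ[volume.restrict (Icc (0 : ℝ) 1)] x n := fun n =>
      (pull_congr ha ha0 p (AEEqFun.coeFn_mk g _) n).trans (hgx n)
    have hSf : S f ≠ ⊤ := by
      have h : S f = ∑' n, ‖x n‖ₑ ^ p := by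
        refine tsum_congr fun n => ?_
        rw [eLpNorm_congr_ae (hf n), Lp.enorm_def]
      rw [h]
      exact (memℓp_iff_tsum_enorm hp0 _).1 (lp.memℓp x)
    have hfr : f ∈ Set.range J := by
      rw [hJr]
      exact (hNtop f).2 (ne_top_of_le_ne_top (ENNReal.mul_ne_top (by simp) hSf) (hIS _))
    obtain ⟨e, he⟩ := hfr
    refine ⟨e, lp.ext (funext fun n => ?_)⟩
    change (hmem e n).toLp = x n
    refine Lp.ext ((MemLp.coeFn_toLp _).trans ?_)
    rw [he]
    exact hf n
  let L := LinearEquiv.ofBijective T ⟨hinj, hsurj⟩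
  refine ⟨L.toContinuousLinearEquivOfBounds 2 2 hup fun y => ?_⟩
  have := hlow (L.symm y)
  rwa [show T (L.symm y) = y from L.apply_symm_apply y] at this

end
end
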